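/- arXiv:math/0211117 — 2 statements merged into one kernel-verified Lean document; each statement's English description precedes it below -/
import Mathlib

section
/- Wiener's Lemma in noncommutative Banach algebras: let 𝒜 be a unital complex Banach algebra and f ∈ A(𝒜) such that f(z) is invertible in 𝒜 for every z ∈ S¹. Then the function g : S¹ → 𝒜 defined by g(z) = f(z)⁻¹ also belongs to A(𝒜), i.e. its Fourier coefficients are summable in norm. -/
/-!
The proof is the Gelfand-theoretic one, with maximal left ideals in place of characters.

`A(𝒜)` is realized as the algebra `convAlg 𝒜` of bounded operators on `ℓ¹(ℤ, 𝒜)` commuting with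
shifts and with right multiplications by constants; as a closed subalgebra it is a Banach algebra.
The function `z` becomes the shift `s`, a central unit with `‖s‖, ‖s⁻¹‖ ≤ 1`. Suppose
`f = ∑ sⁿ cₙ` is not left invertible. Then it lies in a maximal left ideal `J`, which is closed.
Modulo `J` the central element `s` is a scalar `μ` (`exists_sub_mem_of_isMaximal`), necessarily of
modulus one, so `f` is congruent modulo `J` to the constant `f(μ) = ∑ μⁿ cₙ`. That constant is
invertible and would lie in `J`, a contradiction (`exists_left_inverse_of_central`).

A left inverse `G` gives the sequence `g = G δ₀ ∈ ℓ¹(ℤ, 𝒜)` with `(∑ gₙ zⁿ) f(z) = 1` on the circle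
(`exists_conv_left_inverse`), so that `f(z)⁻¹ = ∑ gₙ zⁿ`, whose Fourier coefficients are the `gₙ`
(`fourierCoeffA_tsum`). Fourier inversion for `f` itself is `hasSum_fourierCoeffA`.
-/

open MeasureTheory Filter Topology

/-- The `n`-th Fourier coefficient of a function `f : S¹ → 𝒜`,
`c_n(f) = (1/2π) ∫₀^{2π} e^{-inθ} f(e^{iθ}) dθ`. -/
noncomputable def fourierCoeffA {𝒜 : Type*} [NormedRing 𝒜] [NormedSpace ℂ 𝒜]
    (f : ℂ → 𝒜) (n : ℤ) : 𝒜 :=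
  ((2 * (Real.pi : ℂ)))⁻¹ • ∫ θ in (0:ℝ)..(2 * Real.pi),
    Complex.exp (-(n : ℂ) * Complex.I * (θ : ℂ)) • f (Complex.exp (Complex.I * (θ : ℂ)))

/-! ### Central elements and maximal left ideals -/

/-- Schur's lemma combined with Gelfand–Mazur: modulo a maximal left ideal `J`, a central element
`s` is a scalar. Indeed `s` acts on the Banach space `B ⧸ J`, and for `μ` in the spectrum of this
operator `s - μ` must lie in `J`, since otherwise, `B ⧸ J` being simple, it would act bijectively. -/
theorem exists_sub_mem_of_isMaximal {B : Type*} [NormedRing B] [NormedAlgebra ℂ B]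
    [CompleteSpace B] (s : B) (hs : ∀ x, Commute s x) (J : Ideal B) [hJ : J.IsMaximal] :
    ∃ μ : ℂ, s - algebraMap ℂ B μ ∈ J := by
  set J' : Submodule ℂ B := J.restrictScalars ℂ with hJ'
  have hmem : ∀ x, x ∈ J' ↔ x ∈ J := fun x => Iff.rfl
  have : IsClosed (J' : Set B) := Ideal.IsMaximal.isClosed (I := J)
  have hne : J' ≠ ⊤ := fun h => hJ.ne_top <| (Ideal.eq_top_iff_one _).2 <|
    (hmem 1).1 (h ▸ Submodule.mem_top)
  have : Nontrivial (B ⧸ J') := Submodule.Quotient.nontrivial_iff.2 hne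
  let σ : (B ⧸ J') →L[ℂ] (B ⧸ J') := J'.liftQL (J'.mkQL ∘L ContinuousLinearMap.mul ℂ B s)
    fun x hx => (Submodule.Quotient.mk_eq_zero _).2 (J.mul_mem_left s hx)
  obtain ⟨μ, hμ⟩ := spectrum.nonempty σ
  refine ⟨μ, by_contra fun hd => hμ ?_⟩
  set d := s - algebraMap ℂ B μ with hd'
  have hdc : ∀ x, Commute d x := fun x => (hs x).sub_left (Algebra.commutes μ x)
  have hσ : ∀ x : B, (algebraMap ℂ ((B ⧸ J') →L[ℂ] (B ⧸ J')) μ - σ) (Submodule.Quotient.mk x)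
      = Submodule.Quotient.mk (-(d * x)) := fun x => by
    have : σ (Submodule.Quotient.mk x) = Submodule.Quotient.mk (s * x) := rfl
    rw [sub_apply, this, Algebra.algebraMap_eq_smul_one]
    rw [hd', sub_mul, neg_sub, ← Algebra.smul_def]
    rfl
  have hinj : Function.Injective (algebraMap ℂ ((B ⧸ J') →L[ℂ] (B ⧸ J')) μ - σ) := by
    rw [injective_iff_map_eq_zero]
    intro q
    obtain ⟨x, rfl⟩ := Submodule.Quotient.mk_surjective _ q
    rw [hσ, Submodule.Quotient.mk_eq_zero, Submodule.Quotient.mk_eq_zero, neg_mem_iff]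
    intro hx
    -- `{y | y * d ∈ J}` is a proper left ideal containing `J`, hence equal to it.
    have hK : J = Submodule.comap (LinearMap.toSpanSingleton B B d) J := by
      refine hJ.eq_of_le ?_ fun y hy => ?_
      · rw [Ne, Ideal.eq_top_iff_one]
        simpa using hd
      · simpa [← (hdc y).eq] using J.mul_mem_left d hy
    rw [hmem, hK]
    simpa [← (hdc x).eq] using (hmem _).1 hx
  have hsurj : Function.Surjective (algebraMap ℂ ((B ⧸ J') →L[ℂ] (B ⧸ J')) μ - σ) := by
    intro q
    obtain ⟨y, rfl⟩ := Submodule.Quotient.mk_surjective _ q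
    have htop : J ⊔ Ideal.span {d} = ⊤ := by
      refine hJ.1.2 _ (lt_of_le_of_ne le_sup_left fun h => hd ?_)
      rw [h]
      exact Ideal.mem_sup_right (Ideal.mem_span_singleton_self d)
    have hy : y ∈ J ⊔ Ideal.span {d} := htop ▸ Submodule.mem_top
    obtain ⟨j, hj, e, he, rfl⟩ := Submodule.mem_sup.1 hy
    obtain ⟨a, rfl⟩ := Ideal.mem_span_singleton'.1 he
    refine ⟨Submodule.Quotient.mk (-a), ?_⟩
    rw [hσ, Submodule.Quotient.eq, hmem, (hdc _).eq]
    simpa using hj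
  exact spectrum.mem_resolventSet_iff.2
    (ContinuousLinearMap.isUnit_iff_bijective.2 ⟨hinj, hsurj⟩)

/-- If `s` is a central unit with `‖s‖, ‖s⁻¹‖ ≤ 1` and all the specializations `∑ μⁿ cₙ`, `|μ| = 1`,
are invertible, then `T = ∑ sⁿ cₙ` is left invertible. Otherwise `T` lies in a maximal left ideal
`J`, modulo which `s` is a scalar `μ`; the norm bounds give `|μ| = 1`, and since `J` is closed, `T`
is congruent to the unit `∑ μⁿ cₙ`. -/
theorem exists_left_inverse_of_central {B : Type*} [NormedRing B] [NormedAlgebra ℂ B]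
    [CompleteSpace B] (s : Bˣ) (hs : ∀ x, Commute (s : B) x) (h1 : ‖(s : B)‖ ≤ 1)
    (h2 : ‖((s⁻¹ : Bˣ) : B)‖ ≤ 1) (c : ℤ → B) (T : B)
    (hT : HasSum (fun n => ((s ^ n : Bˣ) : B) * c n) T)
    (hc : ∀ μ : ℂ, ‖μ‖ = 1 → ∃ u : B, IsUnit u ∧ HasSum (fun n => μ ^ n • c n) u) :
    ∃ G : B, G * T = 1 := by
  suffices h : Ideal.span {T} = ⊤ by
    exact Ideal.mem_span_singleton'.1 (h ▸ Submodule.mem_top : (1 : B) ∈ Ideal.span {T})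
  by_contra hne
  obtain ⟨J, hJ, hTJ⟩ := Ideal.exists_le_maximal _ hne
  have hTJ : T ∈ J := hTJ (Ideal.mem_span_singleton_self T)
  obtain ⟨μ, hμ⟩ := exists_sub_mem_of_isMaximal (s : B) hs J
  have hnu : ∀ x ∈ J, ¬ IsUnit x := fun x hx hu => hJ.ne_top (J.eq_top_of_isUnit_mem hx hu)
  have hle : ‖μ‖ ≤ 1 := by
    by_contra! h
    have h0 : μ ≠ 0 := by rintro rfl; simp at h; linarith
    refine hnu (1 - μ⁻¹ • (s : B)) ?_ (isUnit_one_sub_of_norm_lt_one ?_)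
    · convert J.mul_mem_left (algebraMap ℂ B (-μ⁻¹)) hμ using 1
      simp [mul_sub, ← map_mul, h0, Algebra.smul_def]
      abel
    · rw [norm_smul, norm_inv]
      exact (mul_le_of_le_one_right (by positivity) h1).trans_lt (inv_lt_one_of_one_lt₀ h)
  have hge : 1 ≤ ‖μ‖ := by
    by_contra! h
    refine hnu (1 - μ • ((s⁻¹ : Bˣ) : B)) ?_ (isUnit_one_sub_of_norm_lt_one ?_)
    · convert J.mul_mem_left ((s⁻¹ : Bˣ) : B) hμ using 1
      simp [mul_sub, Algebra.smul_def, (Algebra.commutes μ _)]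
    · rw [norm_smul]
      exact (mul_le_of_le_one_right (by positivity) h2).trans_lt h
  have hμ1 : ‖μ‖ = 1 := le_antisymm hle hge
  have h0 : μ ≠ 0 := by rintro rfl; simp at hμ1
  have hpow : ∀ n : ℤ, ((s ^ n : Bˣ) : B) - algebraMap ℂ B (μ ^ n) ∈ J := by
    have hμ' : ((s⁻¹ : Bˣ) : B) - algebraMap ℂ B μ⁻¹ ∈ J := by
      convert J.mul_mem_left (algebraMap ℂ B (-μ⁻¹) * ((s⁻¹ : Bˣ) : B)) hμ using 1
      rw [mul_sub, mul_assoc, Units.inv_mul, mul_assoc, ← Algebra.commutes μ, ← mul_assoc,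
        ← map_mul]
      simp [h0]
      abel
    intro n
    induction n using Int.induction_on with
    | zero => simp
    | succ n ih =>
      convert J.add_mem (J.mul_mem_left (s : B) ih)
        (J.mul_mem_left (algebraMap ℂ B (μ ^ (n : ℤ))) hμ) using 1
      rw [mul_sub, mul_sub, ← map_mul, ← zpow_add_one₀ h0, ← Algebra.commutes, ← Units.val_mul,
        ← zpow_one_add, add_comm (1 : ℤ)]
      abel
    | pred n ih =>
      convert J.add_mem (J.mul_mem_left ((s⁻¹ : Bˣ) : B) ih)
        (J.mul_mem_left (algebraMap ℂ B (μ ^ (-n : ℤ))) hμ') using 1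
      rw [mul_sub, mul_sub, ← map_mul, ← zpow_sub_one₀ h0, ← Algebra.commutes, ← Units.val_mul,
        ← zpow_neg_one, ← zpow_add, add_comm (-1 : ℤ), sub_eq_add_neg (-n : ℤ) 1]
      abel
  obtain ⟨u, hu, hsum⟩ := hc μ hμ1
  have hsn : ∀ (n : ℤ) (x : B), Commute ((s ^ n : Bˣ) : B) x := fun n x =>
    (hs x).units_zpow_left n
  have hdiff : T - u ∈ J := by
    refine (Ideal.IsMaximal.isClosed (I := J)).mem_of_tendsto (hT.sub hsum)
      (Eventually.of_forall fun F => J.sum_mem fun n _ => ?_)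
    convert J.mul_mem_left (c n) (hpow n) using 1
    rw [mul_sub, Algebra.smul_def, (hsn n _).eq, ← Algebra.commutes]
  exact hnu u (by simpa using J.sub_mem hTJ hdiff) hu

/-! ### The convolution algebra -/

section
variable {𝒜 : Type*} [NormedRing 𝒜]

/-- The Banach space `ℓ¹(ℤ, 𝒜)`, the model for `A(𝒜)` via Fourier coefficients. It is a type of its
own rather than an abbreviation of `lp`, so that instances on its operators `→L[ℂ]` are found. -/
def WienerSeq (𝒜 : Type*) [NormedRing 𝒜] : Type _ := lp (fun _ : ℤ => 𝒜) 1

noncomputable instance : NormedAddCommGroup (WienerSeq 𝒜) :=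
  inferInstanceAs (NormedAddCommGroup (lp (fun _ : ℤ => 𝒜) 1))

instance [CompleteSpace 𝒜] : CompleteSpace (WienerSeq 𝒜) :=
  inferInstanceAs (CompleteSpace (lp (fun _ : ℤ => 𝒜) 1))

namespace WienerSeq

instance : FunLike (WienerSeq 𝒜) ℤ 𝒜 where
  coe x := x.1
  coe_injective _ _ h := Subtype.ext h

@[ext] theorem ext {x y : WienerSeq 𝒜} (h : ∀ n, x n = y n) : x = y := DFunLike.ext x y h

@[simp] theorem add_apply (x y : WienerSeq 𝒜) (n : ℤ) : (x + y) n = x n + y n := rfl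

@[simp] theorem zero_apply (n : ℤ) : (0 : WienerSeq 𝒜) n = 0 := rfl

theorem summable_norm (x : WienerSeq 𝒜) : Summable fun n => ‖x n‖ := by
  simpa using! Memℓp.summable (p := 1) (by simp) x.2

theorem norm_eq (x : WienerSeq 𝒜) : ‖x‖ = ∑' n, ‖x n‖ :=
  (lp.norm_eq_tsum_rpow (p := 1) (by simp) x).trans
    (by simp only [ENNReal.toReal_one, Real.rpow_one, div_one]; rfl)

/-- A norm-summable sequence as an element of `ℓ¹(ℤ, 𝒜)`. -/
def mk (x : ℤ → 𝒜) (hx : Summable fun n => ‖x n‖) : WienerSeq 𝒜 :=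
  ⟨x, memℓp_gen (by simpa using hx)⟩

@[simp] theorem mk_apply (x : ℤ → 𝒜) (hx : Summable fun n => ‖x n‖) (n : ℤ) : mk x hx n = x n :=
  rfl

/-- The sequence with value `a` at `n` and zero elsewhere. -/
noncomputable def single (n : ℤ) (a : 𝒜) : WienerSeq 𝒜 := lp.single 1 n a

theorem single_apply (n : ℤ) (a : 𝒜) (m : ℤ) : single n a m = if m = n then a else 0 :=
  (lp.single_apply (E := fun _ : ℤ => 𝒜) 1 n a m).trans (Pi.single_apply n a m)

theorem hasSum_single (x : WienerSeq 𝒜) : HasSum (fun n => single n (x n)) x :=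
  lp.hasSum_single (p := 1) (by simp) x

variable [NormedAlgebra ℂ 𝒜]

noncomputable instance : NormedSpace ℂ (WienerSeq 𝒜) :=
  inferInstanceAs (NormedSpace ℂ (lp (fun _ : ℤ => 𝒜) 1))

@[simp] theorem smul_apply (a : ℂ) (x : WienerSeq 𝒜) (n : ℤ) : (a • x) n = a • x n := rfl

end WienerSeq

variable [NormedAlgebra ℂ 𝒜]

/-- The operator `(x_n) ↦ (A_n x_{e n})` on `ℓ¹(ℤ, 𝒜)`, for a permutation `e` of `ℤ` and a
family of operators `A_n` on `𝒜` bounded by `K`. Shifts and one-sided multiplications are special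
cases. -/
noncomputable def weightedPerm (e : ℤ ≃ ℤ) (A : ℤ → 𝒜 →L[ℂ] 𝒜) (K : ℝ) (hA : ∀ n, ‖A n‖ ≤ K) :
    WienerSeq 𝒜 →L[ℂ] WienerSeq 𝒜 :=
  have hle : ∀ (x : WienerSeq 𝒜) n, ‖A n (x (e n))‖ ≤ K * ‖x (e n)‖ := fun x n =>
    (A n).le_of_opNorm_le (hA n) _
  have hs : ∀ x : WienerSeq 𝒜, Summable fun n => K * ‖x (e n)‖ := fun x =>
    ((e.summable_iff (f := fun n => ‖x n‖)).2 x.summable_norm).mul_left K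
  have hs' : ∀ x : WienerSeq 𝒜, Summable fun n => ‖A n (x (e n))‖ := fun x =>
    .of_nonneg_of_le (fun _ => norm_nonneg _) (hle x) (hs x)
  LinearMap.mkContinuous
    { toFun := fun x => WienerSeq.mk (fun n => A n (x (e n))) (hs' x)
      map_add' := fun x y => by ext n; exact map_add (A n) _ _
      map_smul' := fun c x => by ext n; exact map_smul (A n) _ _ } K fun x => by
    rw [WienerSeq.norm_eq, WienerSeq.norm_eq, ← tsum_mul_left,
      ← e.tsum_eq (fun n => K * ‖x n‖)]
    exact (hs' x).tsum_le_tsum (hle x) (hs x)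

@[simp] theorem weightedPerm_apply (e : ℤ ≃ ℤ) (A : ℤ → 𝒜 →L[ℂ] 𝒜) (K : ℝ)
    (hA : ∀ n, ‖A n‖ ≤ K) (x : WienerSeq 𝒜) (n : ℤ) :
    weightedPerm e A K hA x n = A n (x (e n)) := rfl

theorem norm_weightedPerm_le (e : ℤ ≃ ℤ) (A : ℤ → 𝒜 →L[ℂ] 𝒜) (K : ℝ)
    (hA : ∀ n, ‖A n‖ ≤ K) : ‖weightedPerm e A K hA‖ ≤ K := by
  unfold weightedPerm
  exact LinearMap.mkContinuous_norm_le _ ((norm_nonneg _).trans (hA 0)) _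

/-- The shift by `k`, which corresponds to multiplication by `z ^ k` in `A(𝒜)`. -/
noncomputable def shiftOp (k : ℤ) : WienerSeq 𝒜 →L[ℂ] WienerSeq 𝒜 :=
  weightedPerm (Equiv.subRight k) (fun _ => ContinuousLinearMap.id ℂ 𝒜) 1
    fun _ => ContinuousLinearMap.norm_id_le

@[simp] theorem shiftOp_apply (k : ℤ) (x : WienerSeq 𝒜) (n : ℤ) : shiftOp k x n = x (n - k) := rfl

/-- Left multiplication by a constant `a`. -/
noncomputable def leftOp (a : 𝒜) : WienerSeq 𝒜 →L[ℂ] WienerSeq 𝒜 :=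
  weightedPerm (Equiv.refl ℤ) (fun _ => ContinuousLinearMap.mul ℂ 𝒜 a) ‖a‖
    fun _ => ContinuousLinearMap.opNorm_mul_apply_le ℂ 𝒜 a

@[simp] theorem leftOp_apply (a : 𝒜) (x : WienerSeq 𝒜) (n : ℤ) : leftOp a x n = a * x n := rfl

/-- Right multiplication by a constant `a`. -/
noncomputable def rightOp (a : 𝒜) : WienerSeq 𝒜 →L[ℂ] WienerSeq 𝒜 :=
  weightedPerm (Equiv.refl ℤ) (fun _ => (ContinuousLinearMap.mul ℂ 𝒜).flip a)
    ‖(ContinuousLinearMap.mul ℂ 𝒜).flip a‖ fun _ => le_rfl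

@[simp] theorem rightOp_apply (a : 𝒜) (x : WienerSeq 𝒜) (n : ℤ) : rightOp a x n = x n * a := rfl

theorem single_eq (n : ℤ) (a : 𝒜) : (WienerSeq.single n a)
    = shiftOp n (rightOp a (WienerSeq.single 0 1)) := by
  ext m
  rw [shiftOp_apply, rightOp_apply, WienerSeq.single_apply, WienerSeq.single_apply]
  by_cases h : m = n
  · subst h; simp
  · simp [h, sub_eq_zero]

variable (𝒜) in
/-- The bounded operators on `ℓ¹(ℤ, 𝒜)` that commute with all shifts and with all right
multiplications by constants. These are exactly the left convolution operators, so this is a copy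
of `A(𝒜)` that inherits its Banach algebra structure from the bounded operators. -/
noncomputable def convAlg : Subalgebra ℂ (WienerSeq 𝒜 →L[ℂ] WienerSeq 𝒜) :=
  Subalgebra.centralizer ℂ (Set.range shiftOp ∪ Set.range rightOp)

theorem convAlg_shift (G : convAlg 𝒜) (k : ℤ) (x : WienerSeq 𝒜) :
    G.1 (shiftOp k x) = shiftOp k (G.1 x) :=
  (DFunLike.congr_fun ((Subalgebra.mem_centralizer_iff ℂ).1 G.2 _ (Or.inl ⟨k, rfl⟩)) x).symm

theorem convAlg_right (G : convAlg 𝒜) (a : 𝒜) (x : WienerSeq 𝒜) :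
    G.1 (rightOp a x) = rightOp a (G.1 x) :=
  (DFunLike.congr_fun ((Subalgebra.mem_centralizer_iff ℂ).1 G.2 _ (Or.inr ⟨a, rfl⟩)) x).symm

theorem shiftOp_mem (k : ℤ) : shiftOp k ∈ convAlg 𝒜 := by
  refine (Subalgebra.mem_centralizer_iff ℂ).2 ?_
  rintro _ (⟨j, rfl⟩ | ⟨a, rfl⟩) <;> ext x n
  · simp [sub_right_comm]
  · simp

theorem leftOp_mem (b : 𝒜) : leftOp b ∈ convAlg 𝒜 := by
  refine (Subalgebra.mem_centralizer_iff ℂ).2 ?_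
  rintro _ (⟨j, rfl⟩ | ⟨a, rfl⟩) <;> ext x n <;> simp [mul_assoc]

/-- The constants `𝒜`, acting by left multiplication, as elements of `convAlg 𝒜`. -/
noncomputable def leftHom : 𝒜 →ₐ[ℂ] convAlg 𝒜 where
  toFun a := ⟨leftOp a, leftOp_mem a⟩
  map_one' := by ext x n; simp
  map_mul' a b := by ext x n; simp [mul_assoc]
  map_zero' := by ext x n; simp
  map_add' a b := by ext x n; simp [add_mul]
  commutes' r := by ext x n; simp [Algebra.algebraMap_eq_smul_one]

theorem norm_leftHom_le (a : 𝒜) : ‖leftHom a‖ ≤ ‖a‖ :=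
  norm_weightedPerm_le _ _ _ fun _ => ContinuousLinearMap.opNorm_mul_apply_le ℂ 𝒜 a

/-- The shift by one, i.e. the function `z`, as an invertible element of `convAlg 𝒜`. -/
noncomputable def shiftUnit : (convAlg 𝒜)ˣ where
  val := ⟨shiftOp 1, shiftOp_mem 1⟩
  inv := ⟨shiftOp (-1), shiftOp_mem (-1)⟩
  val_inv := by ext x n; simp
  inv_val := by ext x n; simp

theorem coe_shiftUnit_zpow (n : ℤ) :
    (((shiftUnit ^ n : (convAlg 𝒜)ˣ) : convAlg 𝒜) : WienerSeq 𝒜 →L[ℂ] WienerSeq 𝒜)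
      = shiftOp n := by
  induction n using Int.induction_on with
  | zero => ext x n; simp
  | succ n ih =>
    rw [zpow_add_one, Units.val_mul, Subalgebra.coe_mul, ih]
    ext x m
    change x (m - n - 1) = x (m - (n + 1))
    rw [sub_sub]
  | pred n ih =>
    rw [zpow_sub_one, Units.val_mul, Subalgebra.coe_mul, ih]
    ext x m
    change x (m - -n - -1) = x (m - (-n - 1))
    rw [sub_sub, ← sub_eq_add_neg]

theorem isClosed_convAlg : IsClosed (convAlg 𝒜 : Set (WienerSeq 𝒜 →L[ℂ] WienerSeq 𝒜)) :=
  Set.isClosed_centralizer _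

variable [CompleteSpace 𝒜]

instance : CompleteSpace (convAlg 𝒜) := isClosed_convAlg.completeSpace_coe

theorem summable_smul {c : ℤ → 𝒜} (hc : Summable fun n => ‖c n‖) (z : ℂ) (hz : ‖z‖ = 1) :
    Summable fun n => z ^ n • c n :=
  .of_norm (by simpa [norm_smul, hz] using hc)

/-- The value `∑ xₙ zⁿ` at a point `z` of the circle of the function with coefficients `x`. -/
noncomputable def evalAt (z : ℂ) (hz : ‖z‖ = 1) : WienerSeq 𝒜 →L[ℂ] 𝒜 :=
  LinearMap.mkContinuous
    { toFun := fun x => ∑' n, z ^ n • x n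
      map_add' := fun x y => by
        rw [← (summable_smul x.summable_norm z hz).tsum_add (summable_smul y.summable_norm z hz)]
        simp
      map_smul' := fun a x => by
        rw [RingHom.id_apply, ← (summable_smul x.summable_norm z hz).tsum_const_smul]
        simp [smul_comm a] } 1 fun x => by
    rw [WienerSeq.norm_eq, one_mul]
    refine (norm_tsum_le_tsum_norm ?_).trans_eq ?_ <;> simp [norm_smul, hz, x.summable_norm]

theorem evalAt_apply (z : ℂ) (hz : ‖z‖ = 1) (x : WienerSeq 𝒜) :
    evalAt z hz x = ∑' n, z ^ n • x n := rfl

theorem evalAt_shift (z : ℂ) (hz : ‖z‖ = 1) (k : ℤ) (x : WienerSeq 𝒜) :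
    evalAt z hz (shiftOp k x) = z ^ k • evalAt z hz x := by
  have h0 : z ≠ 0 := by rintro rfl; simp at hz
  rw [evalAt_apply, evalAt_apply, ← (summable_smul x.summable_norm z hz).tsum_const_smul,
    ← (Equiv.addRight k).tsum_eq]
  refine tsum_congr fun n => ?_
  simp [smul_smul, zpow_add₀ h0, mul_comm]

theorem evalAt_right (z : ℂ) (hz : ‖z‖ = 1) (a : 𝒜) (x : WienerSeq 𝒜) :
    evalAt z hz (rightOp a x) = evalAt z hz x * a := by
  rw [evalAt_apply, evalAt_apply, ← (summable_smul x.summable_norm z hz).tsum_mul_right]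
  simp

/-- An element `G` of `convAlg 𝒜` acts on functions as left multiplication by the function whose
coefficients are `G δ₀`. By continuity this needs checking only on the sequences supported at one
point, and those are shifts of right multiples of `δ₀`. -/
theorem evalAt_convAlg (G : convAlg 𝒜) (z : ℂ) (hz : ‖z‖ = 1) (x : WienerSeq 𝒜) :
    evalAt z hz (G.1 x) = evalAt z hz (G.1 (WienerSeq.single 0 1)) * evalAt z hz x := by
  have h := (evalAt z hz ∘L G.1).hasSum x.hasSum_single
  rw [evalAt_apply z hz x, ← (summable_smul x.summable_norm z hz).tsum_mul_left]
  refine h.tsum_eq.symm.trans (tsum_congr fun n => ?_)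
  simp only [ContinuousLinearMap.comp_apply]
  rw [single_eq, convAlg_shift, convAlg_right, evalAt_shift, evalAt_right, mul_smul_comm]

/-- Wiener's lemma for coefficient sequences: a left inverse `G` in `convAlg 𝒜` of the operator
`∑ zⁿ cₙ` yields the sequence `g = G δ₀`. -/
theorem exists_conv_left_inverse (c : ℤ → 𝒜) (hc : Summable fun n => ‖c n‖)
    (hu : ∀ z : ℂ, ‖z‖ = 1 → IsUnit (∑' n, z ^ n • c n)) :
    ∃ g : ℤ → 𝒜, (Summable fun n => ‖g n‖) ∧
      ∀ z : ℂ, ‖z‖ = 1 → (∑' n, z ^ n • g n) * (∑' n, z ^ n • c n) = 1 := by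
  have hnorm : ∀ k : ℤ, ‖(shiftOp k : WienerSeq 𝒜 →L[ℂ] WienerSeq 𝒜)‖ ≤ 1 := fun k =>
    norm_weightedPerm_le _ _ _ fun _ => ContinuousLinearMap.norm_id_le
  have hL : Summable fun n => ‖leftHom (c n)‖ :=
    .of_nonneg_of_le (fun _ => norm_nonneg _) (fun n => norm_leftHom_le (c n)) hc
  have hS : Summable fun n => ((shiftUnit ^ n : (convAlg 𝒜)ˣ) : convAlg 𝒜) * leftHom (c n) := by
    refine .of_norm_bounded hL fun n => (norm_mul_le _ _).trans ?_
    refine mul_le_of_le_one_left (norm_nonneg _) ?_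
    change ‖(((shiftUnit ^ n : (convAlg 𝒜)ˣ) : convAlg 𝒜) : WienerSeq 𝒜 →L[ℂ] WienerSeq 𝒜)‖ ≤ 1
    rw [coe_shiftUnit_zpow]
    exact hnorm n
  obtain ⟨G, hG⟩ := exists_left_inverse_of_central (shiftUnit : (convAlg 𝒜)ˣ)
    (fun x => by ext y n; exact DFunLike.congr_fun (convAlg_shift x 1 y).symm n) (hnorm 1)
    (hnorm (-1)) (fun n => leftHom (c n)) _ hS.hasSum
    fun μ hμ => ⟨leftHom (∑' n, μ ^ n • c n), (hu μ hμ).map leftHom, by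
      simpa using! (leftHom.toLinearMap.mkContinuous 1 fun a =>
        (norm_leftHom_le a).trans_eq (one_mul _).symm).hasSum (summable_smul hc μ hμ).hasSum⟩
  refine ⟨G.1 (WienerSeq.single 0 1), WienerSeq.summable_norm _, fun z hz => ?_⟩
  let x : WienerSeq 𝒜 := .mk c hc
  -- Applied to `δ₀`, the convolution operator with symbol `∑ zⁿ cₙ` returns the sequence `c`.
  have hx : (∑' n, ((shiftUnit ^ n : (convAlg 𝒜)ˣ) : convAlg 𝒜) * leftHom (c n)).1
      (WienerSeq.single 0 1) = x := by
    have h := (ContinuousLinearMap.apply ℂ (WienerSeq 𝒜) (WienerSeq.single 0 1) ∘L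
      (Subalgebra.toSubmodule (convAlg 𝒜)).subtypeL).hasSum hS.hasSum
    refine h.unique (HasSum.congr_fun x.hasSum_single fun n => ?_)
    change (((shiftUnit ^ n : (convAlg 𝒜)ˣ) : convAlg 𝒜) : WienerSeq 𝒜 →L[ℂ] WienerSeq 𝒜)
      (leftOp (c n) (WienerSeq.single 0 1)) = WienerSeq.single n (c n)
    rw [coe_shiftUnit_zpow]
    ext m
    by_cases hm : m = n <;> simp [WienerSeq.single_apply, hm, sub_eq_zero]
  have h1 := evalAt_convAlg G z hz x
  rw [← hx, ← mul_apply_eq_comp, ← Subalgebra.coe_mul, hG, hx] at h1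
  rw [evalAt_apply, evalAt_apply, evalAt_apply] at h1
  refine h1.symm.trans ?_
  rw [tsum_eq_single 0]
  · simp [WienerSeq.single_apply]
  · intro n hn
    simp [WienerSeq.single_apply, hn]
end

/-! ### Fourier series -/

section
variable {𝒜 : Type*} [NormedRing 𝒜] [NormedAlgebra ℂ 𝒜] [CompleteSpace 𝒜]

theorem exp_mem_sphere (θ : ℝ) :
    Complex.exp (Complex.I * (θ : ℂ)) ∈ Metric.sphere (0 : ℂ) 1 := by
  simp [mul_comm Complex.I, Complex.norm_exp_ofReal_mul_I]

/-- Fourier inversion in `A(𝒜)`, deduced from the scalar case by applying the continuous linear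
functionals of `𝒜`. -/
theorem hasSum_fourierCoeffA (f : ℂ → 𝒜) (hf : ContinuousOn f (Metric.sphere (0 : ℂ) 1))
    (hsum : Summable fun n : ℤ => ‖fourierCoeffA f n‖) (z : ℂ) (hz : ‖z‖ = 1) :
    HasSum (fun n : ℤ => z ^ n • fourierCoeffA f n) (f z) := by
  have : Fact (0 < 2 * Real.pi) := ⟨Real.two_pi_pos⟩
  have hs : Summable fun n : ℤ => z ^ n • fourierCoeffA f n :=
    .of_norm (by simpa [norm_smul, hz] using hsum)
  convert hs.hasSum
  refine (SeparatingDual.eq_iff_forall_dual_eq (R := ℂ)).2 fun φ => ?_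
  obtain ⟨F, hF⟩ : ∃ F : C(AddCircle (2 * Real.pi), ℂ), ∀ t, F t = φ (f (fourier 1 t)) :=
    ⟨⟨_, φ.continuous.comp (hf.comp_continuous (map_continuous (fourier 1)) fun t => by
      rw [mem_sphere_zero_iff_norm, fourier_apply]; exact Circle.norm_coe _)⟩, fun _ => rfl⟩
  have hcoe : ∀ (n : ℤ) (θ : ℝ), fourier n (θ : AddCircle (2 * Real.pi))
      = Complex.exp (n * Complex.I * θ) := fun n θ => by
    rw [fourier_coe_apply]
    congr 1
    have := Real.pi_ne_zero
    push_cast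
    field_simp
  have hcont : Continuous fun θ : ℝ => f (Complex.exp (Complex.I * θ)) :=
    hf.comp_continuous (by fun_prop) exp_mem_sphere
  have hint : ∀ n : ℤ, Continuous fun θ : ℝ =>
      Complex.exp (-(n : ℂ) * Complex.I * (θ : ℂ)) • f (Complex.exp (Complex.I * (θ : ℂ))) :=
    fun n => .smul (by fun_prop) hcont
  have hcoef : ∀ n : ℤ, fourierCoeff F n
      = φ (fourierCoeffA f n) := fun n => by
    rw [fourierCoeff_eq_intervalIntegral _ n 0, fourierCoeffA, map_smul,
      ← φ.intervalIntegral_comp_comm ((hint n).intervalIntegrable _ _), zero_add]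
    simp [hcoe, hF]
  have h := has_pointwise_sum_fourier_series_of_summable (f := F) (by
      rw [show fourierCoeff F = _ from funext hcoef]
      exact φ.summable hsum.of_norm) (Complex.arg z : ℝ)
  have hz' : Complex.exp (Complex.I * Complex.arg z) = z := by
    have := Complex.norm_mul_exp_arg_mul_I z
    rwa [hz, Complex.ofReal_one, one_mul, mul_comm] at this
  have hz'' : ∀ n : ℤ, Complex.exp (n * Complex.I * Complex.arg z) = z ^ n := fun n => by
    conv_rhs => rw [← hz', ← Complex.exp_int_mul, ← mul_assoc]
  simp only [hcoef, hcoe, hz'', hF, Int.cast_one, one_mul, hz'] at h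
  refine h.unique (HasSum.congr_fun (φ.hasSum hs.hasSum) fun n => ?_)
  rw [map_smul, smul_eq_mul, smul_eq_mul, mul_comm]

theorem fourierCoeffA_tsum (g : ℤ → 𝒜) (hg : Summable fun n => ‖g n‖) (m : ℤ) :
    fourierCoeffA (fun z => ∑' n, z ^ n • g n) m = g m := by
  have hint : ∀ n : ℤ, (∫ θ in (0:ℝ)..(2 * Real.pi),
      Complex.exp (((n - m : ℤ) * Complex.I) * (θ : ℂ)) • g n) =
      if n = m then (2 * (Real.pi : ℂ)) • g m else 0 := fun n => by
    rw [intervalIntegral.integral_smul_const]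
    split_ifs with h
    · subst h; simp
    · rw [integral_exp_mul_complex]
      · have := Complex.exp_int_mul_two_pi_mul_I (n - m)
        rw [show (((n - m : ℤ) : ℂ) * Complex.I * ((2 * Real.pi : ℝ) : ℂ))
          = ((n - m : ℤ) : ℂ) * (2 * Real.pi * Complex.I) by push_cast; ring, this]
        simp
      · simpa [sub_eq_zero] using h
  have hterm : ∀ (θ : ℝ) (n : ℤ), Complex.exp (-(m : ℂ) * Complex.I * (θ : ℂ)) •
      (Complex.exp (Complex.I * (θ : ℂ)) ^ n • g n)
      = Complex.exp (((n - m : ℤ) * Complex.I) * (θ : ℂ)) • g n := fun θ n => by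
    rw [smul_smul, ← Complex.exp_int_mul, ← Complex.exp_add]
    congr 2
    push_cast
    ring
  have hnorm : ∀ (θ : ℝ) (n : ℤ),
      ‖Complex.exp (((n - m : ℤ) * Complex.I) * (θ : ℂ)) • g n‖ = ‖g n‖ := fun θ n => by
    rw [norm_smul, show ((n - m : ℤ) * Complex.I) * (θ : ℂ)
      = (((n - m : ℤ) * θ : ℝ) : ℂ) * Complex.I by push_cast; ring, Complex.norm_exp_ofReal_mul_I, one_mul]
  have key := intervalIntegral.hasSum_integral_of_dominated_convergence (μ := volume)
    (a := 0) (b := 2 * Real.pi)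
    (F := fun (n : ℤ) (θ : ℝ) => Complex.exp (((n - m : ℤ) * Complex.I) * (θ : ℂ)) • g n)
    (f := fun θ : ℝ => Complex.exp (-(m : ℂ) * Complex.I * (θ : ℂ)) •
      ∑' n, Complex.exp (Complex.I * (θ : ℂ)) ^ n • g n)
    (fun n _ => ‖g n‖)
    (fun n => Continuous.aestronglyMeasurable (by fun_prop))
    (fun n => .of_forall fun θ _ => (hnorm θ n).le)
    (.of_forall fun θ _ => hg) intervalIntegrable_const
    (.of_forall fun θ _ => by
      have hs : Summable fun n : ℤ => Complex.exp (Complex.I * (θ : ℂ)) ^ n • g n := by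
        refine .of_norm ?_
        have := exp_mem_sphere θ
        rw [mem_sphere_zero_iff_norm] at this
        simpa [norm_smul, this] using hg
      rw [← hs.tsum_const_smul]
      simp_rw [hterm]
      exact (Summable.of_norm (by simpa only [hnorm] using hg)).hasSum)
  simp_rw [hint] at key
  rw [fourierCoeffA, ← key.tsum_eq, tsum_ite_eq, smul_smul, inv_mul_cancel₀, one_smul]
  simp [Real.pi_ne_zero]
end

/-- Wiener's Lemma in a (noncommutative) unital complex Banach algebra `𝒜`:
if `f : S¹ → 𝒜` is continuous with summable Fourier coefficients and `f z` is
invertible for every `z ∈ S¹`, then `z ↦ (f z)⁻¹` is continuous on `S¹` and has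
summable Fourier coefficients, i.e. it belongs to `A(𝒜)`. -/
theorem wiener_lemma_banach_algebra {𝒜 : Type*} [NormedRing 𝒜] [NormedAlgebra ℂ 𝒜]
    [CompleteSpace 𝒜] (f : ℂ → 𝒜)
    (hf_cont : ContinuousOn f (Metric.sphere (0:ℂ) 1))
    (hf_sum : Summable fun n : ℤ => ‖fourierCoeffA f n‖)
    (hf_inv : ∀ z ∈ Metric.sphere (0:ℂ) 1, IsUnit (f z)) :
    ContinuousOn (fun z => Ring.inverse (f z)) (Metric.sphere (0:ℂ) 1) ∧
      Summable fun n : ℤ => ‖fourierCoeffA (fun z => Ring.inverse (f z)) n‖ := by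
  refine ⟨fun z hz => ?_, ?_⟩
  · obtain ⟨u, hu⟩ := hf_inv z hz
    have h := NormedRing.inverse_continuousAt u
    rw [hu] at h
    exact h.comp_continuousWithinAt (hf_cont z hz)
  have hsum := hasSum_fourierCoeffA f hf_cont hf_sum
  obtain ⟨g, hg, hgf⟩ := exists_conv_left_inverse (fourierCoeffA f) hf_sum fun z hz => by
    rw [(hsum z hz).tsum_eq]
    exact hf_inv z (by simpa using hz)
  have heq : ∀ z ∈ Metric.sphere (0 : ℂ) 1, Ring.inverse (f z) = ∑' n, z ^ n • g n := by
    intro z hz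
    have hz1 : ‖z‖ = 1 := by simpa using hz
    have h := hgf z hz1
    rw [(hsum z hz1).tsum_eq] at h
    obtain ⟨u, hu⟩ := hf_inv z hz
    rw [← hu] at h ⊢
    rw [Ring.inverse_unit]
    exact (Units.eq_inv_of_mul_eq_one_right h).symm
  have hcoef : ∀ n, fourierCoeffA (fun z => Ring.inverse (f z)) n = g n := fun n => by
    rw [← fourierCoeffA_tsum g hg n]
    simp only [fourierCoeffA, heq _ (exp_mem_sphere _)]
  simpa only [hcoef] using hg
end

section
/- Abstract perturbative theorem: under the renewal setup together with the perturbation hypotheses, the following hold. (1) There exists ε₀ > 0 such that for all t with |t| < ε₀ and all z in the open unit disk 𝔻, I − R(z,t) is invertible; consequently one may write (I − R(z,t))⁻¹ = Σ_{n≥0} T_{n,t} zⁿ as a power series on 𝔻. (2) There exist functions ε(t), defined for |t| < ε₀ with ε(t) → 0 as t → 0, and δ̂(n) with δ̂(n) → 0 as n → ∞, such that for all |t| < ε₀ and all n ≥ 1, ‖T_{n,t} − (1/μ)(1 − (c/μ)M(|t|))ⁿ P‖ ≤ ε(t) + δ̂(n). -/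
/-!
Write `1 - R(z,t)` as a power series with coefficients in the Banach algebra `B` of bounded
operators. All series here live in the Wiener algebra `ℓ¹(ℕ, B)`, in which Wiener's lemma holds in
noncommutative form (`Wiener.isUnit_of_ev`): a series with invertible values on the closed disk is
invertible. The proof of the latter takes a maximal left ideal `M`; by Schur's lemma and
nonemptiness of the spectrum the central variable `X` acts on the quotient by `M` as a scalar `ζ`
of the closed disk, so that `f - f(ζ) ∈ M` for all `f`.

The inverse of `1 - R(z,t)` is singular near `z = 1`, and the singularity is removed by hand. Put
`ρ = 1 - (c/μ) M(|t|)`, so that the eigenvalue satisfies `1 - λ(1,t) = κ (1 - ρ)` with `κ → μ`. Let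
`Pt → P` satisfy `R(1,t) Pt = λ(1,t) Pt` (`exists_perturbed_eigenprojection`),
`W = -Q R'(1) P` with `Q` the reduced inverse of `1 - R(1)`, and `q = (1 - ρ) X / (1 - ρ X)`. Then
the product `N = (1 - R(·,t)) (Pt / (1 - ρ X) + (1 - q) W + (1 - P))` lies in the Wiener algebra
(`Wiener.perturbed_factor`) and converges in norm, as `t → 0`, to the unperturbed series
`(1 - R) (P / (1 - X) + W + (1 - P))`. The convergence rests on two facts: `q` is bounded in norm,
because `Re c > 0` makes `ρ` approach `1` nontangentially, and multiplication by `q` tends strongly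
to `0` on series that vanish at `1`; the choice of `W` makes the relevant series vanish there. The
limit is invertible at every point of the closed disk, hence a unit, so `N` is a unit for small `t`,
with inverse `V → V₀`.

Consequently `T = (Pt / (1 - ρ X) + (1 - q) W + (1 - P)) V` inverts `1 - R(·,t)`. Its coefficients
are `ρⁿ P V₀(1) = ρⁿ P / μ` up to an error that is small when `t` is small and `n` is large
simultaneously (`Wiener.renewal_core`); such a joint limit splits as `ε(t) + δ(n)`
(`exists_separated_bound`).
-/

open MeasureTheory Filter Topology

/-- `R(z) = Σ_{n} R_n zⁿ`. -/
noncomputable def renewalRz {L : Type*} [NormedAddCommGroup L] [NormedSpace ℂ L]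
    (R : ℕ → L →L[ℂ] L) (z : ℂ) : L →L[ℂ] L := ∑' n : ℕ, z ^ n • R n

/-- `R(z,t) = Σ_{n} R_n(t) zⁿ`. -/
noncomputable def renewalRzt {L : Type*} [NormedAddCommGroup L] [NormedSpace ℂ L]
    (Rt : ℝ → ℕ → L →L[ℂ] L) (z : ℂ) (t : ℝ) : L →L[ℂ] L := ∑' n : ℕ, z ^ n • Rt t n

/-! ### The Wiener algebra -/

section WienerAlgebra

variable (B : Type*) [NormedRing B] [NormedAlgebra ℂ B]

/-- Power series over `B` with absolutely summable coefficients, as a subalgebra of all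
formal power series. -/
def wienerSubalgebra : Subalgebra ℂ (PowerSeries B) where
  carrier := {f | Summable fun n => ‖PowerSeries.coeff n f‖}
  mul_mem' {f g} hf hg := by
    change Summable fun n => ‖PowerSeries.coeff n (f * g)‖
    simp only [PowerSeries.coeff_mul]
    exact summable_norm_sum_mul_antidiagonal_of_summable_norm
      (f := fun n => PowerSeries.coeff n f) (g := fun n => PowerSeries.coeff n g) hf hg
  add_mem' {f g} hf hg := by
    change Summable fun n => ‖PowerSeries.coeff n (f + g)‖
    simp only [map_add]
    exact Summable.of_nonneg_of_le (fun _ => norm_nonneg _) (fun _ => norm_add_le _ _)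
      (Summable.add (f := fun n => ‖PowerSeries.coeff n f‖) hf hg)
  algebraMap_mem' r := by
    refine summable_of_ne_finset_zero (s := {0}) fun n hn => ?_
    have hn : n ≠ 0 := by simpa using hn
    rw [Algebra.algebraMap_eq_smul_one, PowerSeries.coeff_smul, PowerSeries.coeff_one]
    simp [hn]

/-- The Wiener algebra `ℓ¹(ℕ, B)` of absolutely summable power series with coefficients in `B`,
with the convolution product. -/
def Wiener : Type _ := wienerSubalgebra B

noncomputable instance : Ring (Wiener B) := inferInstanceAs (Ring (wienerSubalgebra B))
noncomputable instance : Algebra ℂ (Wiener B) := inferInstanceAs (Algebra ℂ (wienerSubalgebra B))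

variable {B}

namespace Wiener

/-- The formal power series underlying an element of the Wiener algebra. -/
noncomputable def ps : Wiener B →ₐ[ℂ] PowerSeries B := (wienerSubalgebra B).val

/-- The `n`-th coefficient. -/
noncomputable def cf (f : Wiener B) (n : ℕ) : B := PowerSeries.coeff n (ps f)

lemma ps_injective : Function.Injective (ps : Wiener B → PowerSeries B) :=
  Subtype.val_injective

lemma ext_cf {f g : Wiener B} (h : ∀ n, f.cf n = g.cf n) : f = g :=
  ps_injective (PowerSeries.ext h)

lemma summable_cf (f : Wiener B) : Summable fun n => ‖f.cf n‖ := f.2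

/-- The element of the Wiener algebra with a given absolutely summable coefficient sequence. -/
noncomputable def ofSeq (a : ℕ → B) (h : Summable fun n => ‖a n‖) : Wiener B :=
  ⟨PowerSeries.mk a, by
    change Summable fun n => ‖PowerSeries.coeff n (PowerSeries.mk a)‖
    simpa only [PowerSeries.coeff_mk] using h⟩

@[simp] lemma cf_ofSeq (a : ℕ → B) (h : Summable fun n => ‖a n‖) (n : ℕ) :
    (ofSeq a h).cf n = a n := PowerSeries.coeff_mk n a

@[simp] lemma cf_zero (n : ℕ) : (0 : Wiener B).cf n = 0 := by simp [cf]
@[simp] lemma cf_add (f g : Wiener B) (n : ℕ) : (f + g).cf n = f.cf n + g.cf n := by simp [cf]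
@[simp] lemma cf_neg (f : Wiener B) (n : ℕ) : (-f).cf n = -f.cf n := by simp [cf]
@[simp] lemma cf_sub (f g : Wiener B) (n : ℕ) : (f - g).cf n = f.cf n - g.cf n := by simp [cf]
@[simp] lemma cf_smul (c : ℂ) (f : Wiener B) (n : ℕ) : (c • f).cf n = c • f.cf n := by
  simp only [cf, map_smul, PowerSeries.coeff_smul]
lemma cf_mul (f g : Wiener B) (n : ℕ) :
    (f * g).cf n = ∑ kl ∈ Finset.HasAntidiagonal.antidiagonal n, f.cf kl.1 * g.cf kl.2 := by
  simp only [cf, map_mul, PowerSeries.coeff_mul]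

noncomputable instance : NormedAddCommGroup (Wiener B) :=
  AddGroupNorm.toNormedAddCommGroup
    { toFun := fun f => ∑' n, ‖f.cf n‖
      map_zero' := by simp
      add_le' := fun f g => by
        rw [← (summable_cf f).tsum_add (summable_cf g)]
        refine (summable_cf (f + g)).tsum_le_tsum (fun n => ?_)
          ((summable_cf f).add (summable_cf g))
        rw [cf_add]; exact norm_add_le _ _
      neg' := fun f => by simp
      eq_zero_of_map_eq_zero' := fun f hf => by
        refine ext_cf fun n => ?_
        have h := (summable_cf f).hasSum
        have hf' : ∑' n, ‖f.cf n‖ = 0 := hf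
        rw [hf', hasSum_zero_iff_of_nonneg fun n => norm_nonneg _] at h
        simpa using congrFun h n }

lemma norm_def (f : Wiener B) : ‖f‖ = ∑' n, ‖f.cf n‖ := rfl

lemma norm_cf_le (f : Wiener B) (n : ℕ) : ‖f.cf n‖ ≤ ‖f‖ :=
  (summable_cf f).le_tsum n fun _ _ => norm_nonneg _

noncomputable instance : NormedRing (Wiener B) where
  __ := (inferInstance : NormedAddCommGroup (Wiener B))
  __ := (inferInstance : Ring (Wiener B))
  norm_mul_le f g := by
    have h := tsum_mul_tsum_eq_tsum_sum_antidiagonal_of_summable_norm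
      (f := fun n => ‖f.cf n‖) (g := fun n => ‖g.cf n‖)
      (by simpa using summable_cf f) (by simpa using summable_cf g)
    have h2 := (summable_norm_sum_mul_antidiagonal_of_summable_norm
      (f := fun n => ‖f.cf n‖) (g := fun n => ‖g.cf n‖)
      (by simpa using summable_cf f) (by simpa using summable_cf g)).of_norm
    rw [norm_def f, norm_def g, h]
    refine (summable_cf (f * g)).tsum_le_tsum (fun n => ?_) h2
    rw [cf_mul]
    exact (norm_sum_le _ _).trans (Finset.sum_le_sum fun _ _ => norm_mul_le _ _)

noncomputable instance : NormedAlgebra ℂ (Wiener B) where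
  norm_smul_le c f := by
    rw [norm_def, norm_def, ← tsum_mul_left]
    simp [norm_smul]

instance [CompleteSpace B] : CompleteSpace (Wiener B) := by
  -- `ℓ¹(ℕ, B)` in the sense of `lp` is complete, and the Wiener algebra is isometric to it.
  have key : ∀ a : ℕ → B, Memℓp a 1 ↔ Summable fun n => ‖a n‖ := fun a => by
    rw [memℓp_gen_iff (by simp)]; simp
  let e : Wiener B ≃ lp (fun _ : ℕ => B) 1 :=
    { toFun := fun f => ⟨f.cf, (key _).2 (summable_cf f)⟩
      invFun := fun a => ofSeq a ((key _).1 a.2)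
      left_inv := fun f => ext_cf fun n => cf_ofSeq _ _ n
      right_inv := fun a => Subtype.ext (funext fun n => cf_ofSeq _ _ n) }
  have he : Isometry e := by
    refine Isometry.of_dist_eq fun f g => ?_
    rw [dist_eq_norm, dist_eq_norm, lp.norm_eq_tsum_rpow (by simp), norm_def]
    simp [e]
    rfl
  exact (IsometryEquiv.mk e he).completeSpace_iff.2 inferInstance

/-- The embedding of `B` as constant series. -/
noncomputable def C : B →+* Wiener B where
  toFun b := ⟨PowerSeries.C b, by
    refine summable_of_ne_finset_zero (s := {0}) fun n hn => ?_
    have hn : n ≠ 0 := by simpa using hn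
    rw [PowerSeries.coeff_C]; simp [hn]⟩
  map_one' := ps_injective (map_one PowerSeries.C)
  map_zero' := ps_injective (map_zero PowerSeries.C)
  map_mul' a b := ps_injective (map_mul PowerSeries.C a b)
  map_add' a b := ps_injective (map_add PowerSeries.C a b)

lemma ps_C (b : B) : ps (C b) = PowerSeries.C b := rfl

/-- The indeterminate. -/
noncomputable def X : Wiener B :=
  ⟨PowerSeries.X, by
    refine summable_of_ne_finset_zero (s := {1}) fun n hn => ?_
    have hn : n ≠ 1 := by simpa using hn
    rw [PowerSeries.coeff_X]; simp [hn]⟩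

lemma ps_X : ps (X : Wiener B) = PowerSeries.X := rfl

lemma commute_X (f : Wiener B) : Commute f X :=
  ps_injective (PowerSeries.commute_X (ps f))

lemma cf_C (b : B) (n : ℕ) : (C b).cf n = if n = 0 then b else 0 := by
  rw [cf, ps_C, PowerSeries.coeff_C]

lemma cf_C_mul (b : B) (f : Wiener B) (n : ℕ) : (C b * f).cf n = b * f.cf n := by
  rw [cf, map_mul, ps_C, PowerSeries.coeff_C_mul]; rfl

lemma cf_C_mul_X_pow (b : B) (k n : ℕ) : (C b * X ^ k).cf n = if n = k then b else 0 := by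
  rw [cf, map_mul, map_pow, ps_C, ps_X, PowerSeries.coeff_C_mul_X_pow]

lemma norm_C_mul_X_pow (b : B) (k : ℕ) : ‖C b * X ^ k‖ = ‖b‖ := by
  rw [norm_def, tsum_eq_single k]
  · simp [cf_C_mul_X_pow]
  · intro n hn; simp [cf_C_mul_X_pow, hn]

lemma norm_C (b : B) : ‖C b‖ = ‖b‖ := by simpa using norm_C_mul_X_pow b 0

lemma C_smul (c : ℂ) (b : B) : C (c • b) = c • C b :=
  ext_cf fun n => by rw [cf_smul, cf_C, cf_C]; split_ifs <;> simp

/-- The constant embedding as a continuous linear map. -/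
noncomputable def CL : B →L[ℂ] Wiener B :=
  LinearMap.mkContinuous { toFun := C, map_add' := map_add C, map_smul' := C_smul } 1
    fun b => by simp [norm_C]

lemma continuous_C : Continuous (C : B → Wiener B) := CL.continuous

/-- Multiplication by the indeterminate shifts coefficients, hence is isometric. -/
lemma norm_X_mul (f : Wiener B) : ‖X * f‖ = ‖f‖ := by
  have h0 : (X * f).cf 0 = 0 := by simp [cf, ps_X]
  have h1 : ∀ n, (X * f).cf (n + 1) = f.cf n := fun n => by
    simp only [cf, map_mul, ps_X, PowerSeries.coeff_succ_X_mul]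
  rw [norm_def, (summable_cf _).tsum_eq_zero_add, h0]
  simp [h1, norm_def]

lemma hasSum_monomials [CompleteSpace B] (f : Wiener B) : HasSum (fun n => C (f.cf n) * X ^ n) f := by
  have hs : Summable fun n => C (f.cf n) * X ^ n :=
    Summable.of_norm (by simpa only [norm_C_mul_X_pow] using summable_cf f)
  convert hs.hasSum using 1
  let cfL (n : ℕ) : Wiener B →L[ℂ] B := LinearMap.mkContinuous
    { toFun := fun f => f.cf n, map_add' := fun f g => cf_add f g n,
      map_smul' := fun c f => cf_smul c f n } 1 fun f => by simpa using norm_cf_le f n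
  refine ext_cf fun n => ?_
  have h := (cfL n).map_tsum hs
  change (∑' k, C (f.cf k) * X ^ k).cf n = ∑' k, (C (f.cf k) * X ^ k).cf n at h
  rw [h, tsum_eq_single n]
  · simp [cf_C_mul_X_pow]
  · intro k hk; simp [cf_C_mul_X_pow, hk.symm]

lemma summable_eval (z : ℂ) (hz : ‖z‖ ≤ 1) (f : Wiener B) : Summable fun n => ‖z ^ n • f.cf n‖ := by
  refine Summable.of_nonneg_of_le (fun _ => norm_nonneg _) (fun n => ?_) (summable_cf f)
  rw [norm_smul, norm_pow]
  exact mul_le_of_le_one_left (norm_nonneg _) (pow_le_one₀ (norm_nonneg _) hz)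

/-- Cauchy product for operator-valued power series at a point of absolute convergence. -/
lemma tsum_coeff_mul [CompleteSpace B] (z : ℂ) (f g : PowerSeries B)
    (hf : Summable fun n => ‖z ^ n • PowerSeries.coeff n f‖)
    (hg : Summable fun n => ‖z ^ n • PowerSeries.coeff n g‖) :
    ∑' n, z ^ n • PowerSeries.coeff n (f * g) =
      (∑' n, z ^ n • PowerSeries.coeff n f) * ∑' n, z ^ n • PowerSeries.coeff n g := by
  rw [tsum_mul_tsum_eq_tsum_sum_antidiagonal_of_summable_norm hf hg]
  refine tsum_congr fun n => ?_
  rw [PowerSeries.coeff_mul, Finset.smul_sum]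
  refine Finset.sum_congr rfl fun kl hkl => ?_
  rw [← Finset.HasAntidiagonal.mem_antidiagonal.1 hkl, pow_add, smul_mul_smul_comm]

/-- Evaluation at a point of the closed unit disk. -/
noncomputable def ev [CompleteSpace B] (z : ℂ) (hz : ‖z‖ ≤ 1) : Wiener B →+* B where
  toFun f := ∑' n, z ^ n • f.cf n
  map_one' := by
    rw [← map_one C, tsum_eq_single 0]
    · rw [cf_C]; simp
    · intro n hn; rw [cf_C]; simp [hn]
  map_zero' := by simp
  map_mul' f g := by
    simp only [cf, map_mul]
    exact tsum_coeff_mul z _ _ (summable_eval z hz f) (summable_eval z hz g)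
  map_add' f g := by
    simp only [cf_add, smul_add]
    exact (summable_eval z hz f).of_norm.tsum_add (summable_eval z hz g).of_norm

variable [CompleteSpace B] (z : ℂ) (hz : ‖z‖ ≤ 1)

lemma ev_apply (f : Wiener B) : ev z hz f = ∑' n, z ^ n • f.cf n := rfl

@[simp] lemma ev_C (b : B) : ev z hz (C b) = b := by
  rw [ev_apply, tsum_eq_single 0]
  · simp [cf_C]
  · intro n hn; simp [cf_C, hn]

@[simp] lemma ev_C_mul_X_pow (b : B) (k : ℕ) : ev z hz (C b * X ^ k) = z ^ k • b := by
  rw [ev_apply, tsum_eq_single k]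
  · simp [cf_C_mul_X_pow]
  · intro n hn; simp [cf_C_mul_X_pow, hn]

lemma norm_ev_le (f : Wiener B) : ‖ev z hz f‖ ≤ ‖f‖ := by
  rw [ev_apply]
  refine (norm_tsum_le_tsum_norm (summable_eval z hz f)).trans ?_
  refine (summable_eval z hz f).tsum_le_tsum (fun n => ?_) (summable_cf f)
  rw [norm_smul, norm_pow]
  exact mul_le_of_le_one_left (norm_nonneg _) (pow_le_one₀ (norm_nonneg _) hz)

lemma continuous_ev : Continuous (ev (B := B) z hz) :=
  AddMonoidHomClass.continuous_of_bound (ev (B := B) z hz) 1 fun f => by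
    simpa using norm_ev_le z hz f

@[simp] lemma ev_X : ev (B := B) z hz X = z • (1 : B) := by
  simpa using ev_C_mul_X_pow z hz (1 : B) 1

end Wiener
end WienerAlgebra

/-! ### Wiener's lemma -/

namespace Wiener

variable {B : Type*} [NormedRing B] [NormedAlgebra ℂ B] [CompleteSpace B]

/-- By Schur's lemma and the nonemptiness of the spectrum, the central element `X` acts on the
simple module `Wiener B ⧸ M` as a scalar; the scalar lies in the closed disk since
multiplication by `X` is isometric on `Wiener B`. -/
lemma exists_X_sub_mem (M : Ideal (Wiener B)) [hM : M.IsMaximal] :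
    ∃ ζ : ℂ, ‖ζ‖ ≤ 1 ∧ X - algebraMap ℂ (Wiener B) ζ ∈ M := by
  have : IsClosed (M : Set (Wiener B)) := Ideal.IsMaximal.isClosed
  have : IsSimpleModule (Wiener B) (Wiener B ⧸ M) :=
    isSimpleModule_iff_isCoatom.2 hM.out
  have : Nontrivial (Wiener B ⧸ M) := IsSimpleModule.nontrivial (Wiener B) _
  -- multiplication by `X` on the quotient, as a module endomorphism
  let x : (Wiener B ⧸ M) →ₗ[Wiener B] (Wiener B ⧸ M) :=
    M.mapQ M (LinearMap.toSpanSingleton (Wiener B) (Wiener B) X) (by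
      intro a ha
      change a • X ∈ M
      rw [smul_eq_mul, (commute_X a).eq]
      exact M.mul_mem_left _ ha)
  have hx : ∀ a : Wiener B, x (Submodule.Quotient.mk a) = Submodule.Quotient.mk (X * a) :=
    fun a => by
      rw [← (commute_X a).eq]; rfl
  have hnorm : ∀ y, ‖x y‖ ≤ 1 * ‖y‖ := fun y => by
    rw [one_mul]
    refine le_of_forall_pos_le_add fun ε hε => ?_
    obtain ⟨a, rfl, ha⟩ := Submodule.Quotient.norm_mk_lt y hε
    rw [hx]
    exact (Submodule.Quotient.norm_mk_le M _).trans ((norm_X_mul a).le.trans ha.le)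
  let xc : (Wiener B ⧸ M) →L[ℂ] (Wiener B ⧸ M) :=
    (x.restrictScalars ℂ).mkContinuous 1 hnorm
  obtain ⟨ζ, hζ⟩ := spectrum.nonempty xc
  refine ⟨ζ, (spectrum.norm_le_norm_of_mem hζ).trans
    (LinearMap.mkContinuous_norm_le _ zero_le_one _), ?_⟩
  let y : (Wiener B ⧸ M) →ₗ[Wiener B] (Wiener B ⧸ M) := ζ • LinearMap.id - x
  have hy : ∀ v, y v = (algebraMap ℂ _ ζ - xc) v := fun v => by
    rw [Algebra.algebraMap_eq_smul_one]; rfl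
  rcases LinearMap.bijective_or_eq_zero y with hb | h0
  · exfalso
    refine hζ (ContinuousLinearMap.isUnit_iff_bijective.2 ?_)
    have : ⇑(algebraMap ℂ ((Wiener B ⧸ M) →L[ℂ] (Wiener B ⧸ M)) ζ - xc) = y :=
      funext fun v => (hy v).symm
    rw [this]; exact hb
  · have h1 : y (Submodule.Quotient.mk 1) = 0 := by rw [h0]; rfl
    have h2 : ζ • (Submodule.Quotient.mk 1 : Wiener B ⧸ M) - x (Submodule.Quotient.mk 1) = 0 := h1
    rw [hx, mul_one, ← Submodule.Quotient.mk_smul, ← Submodule.Quotient.mk_sub,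
      Submodule.Quotient.mk_eq_zero] at h2
    rw [Algebra.algebraMap_eq_smul_one, ← neg_sub]
    exact M.neg_mem h2

/-- A closed left ideal containing `X - ζ` contains `f - f(ζ)` for every `f`. -/
lemma sub_ev_mem (M : Ideal (Wiener B)) (hc : IsClosed (M : Set (Wiener B))) (ζ : ℂ)
    (hζ : ‖ζ‖ ≤ 1) (hX : X - algebraMap ℂ (Wiener B) ζ ∈ M) (f : Wiener B) :
    f - C (ev ζ hζ f) ∈ M := by
  have h1 := hasSum_monomials f
  have h2 : HasSum (fun n => C (ζ ^ n • f.cf n)) (C (ev ζ hζ f)) :=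
    CL.hasSum (summable_eval ζ hζ f).of_norm.hasSum
  refine hc.mem_of_tendsto (h1.sub h2) (Eventually.of_forall fun s => M.sum_mem fun n _ => ?_)
  have h3 : C (f.cf n) * X ^ n - C (ζ ^ n • f.cf n) =
      C (f.cf n) * (X ^ n - algebraMap ℂ (Wiener B) ζ ^ n) := by
    rw [mul_sub, C_smul, ← map_pow, ← Algebra.commutes, Algebra.smul_def]
  rw [h3, ← (Commute.symm (commute_X _)).geom_sum₂_mul]
  exact M.mul_mem_left _ (M.mul_mem_left _ hX)

/-- Wiener's lemma, noncommutative form: an absolutely convergent power series with invertible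
values on the closed unit disk is invertible in the Wiener algebra. -/
theorem isUnit_of_ev (f : Wiener B) (h : ∀ z (hz : ‖z‖ ≤ 1), IsUnit (ev z hz f)) : IsUnit f := by
  -- `f` lies in no maximal left ideal, hence is left invertible
  have hspan : Ideal.span {f} = ⊤ := by
    by_contra hne
    obtain ⟨M, hM, hle⟩ := Ideal.exists_le_maximal _ hne
    obtain ⟨ζ, hζ, hX⟩ := exists_X_sub_mem M
    have hf : f ∈ M := hle (Ideal.subset_span rfl)
    have h1 : C (ev ζ hζ f) ∈ M := by
      have := M.sub_mem hf (sub_ev_mem M Ideal.IsMaximal.isClosed ζ hζ hX f)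
      simpa using this
    exact hM.ne_top (Ideal.eq_top_of_isUnit_mem _ h1 ((h ζ hζ).map C))
  obtain ⟨g, hg⟩ := Ideal.mem_span_singleton'.1 (hspan ▸ Submodule.mem_top : (1 : Wiener B) ∈ _)
  -- a formal right inverse exists since the constant coefficient `f(0)` is invertible
  obtain ⟨u, hu⟩ := h 0 (by simp)
  have hu' : PowerSeries.constantCoeff (ps f) = u := by
    rw [hu, ev_apply, tsum_eq_single 0 (fun n hn => by simp [hn])]
    simp [cf]
  have hr := PowerSeries.mul_invOfUnit (ps f) u hu'
  have hg' : ps g * ps f = 1 := by rw [← map_mul, hg, map_one]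
  have hgr : ps g = PowerSeries.invOfUnit (ps f) u := by
    calc ps g = ps g * (ps f * PowerSeries.invOfUnit (ps f) u) := by rw [hr, mul_one]
      _ = _ := by rw [← mul_assoc, hg', one_mul]
  have hfg : f * g = 1 := ps_injective (by rw [map_mul, hgr, hr, map_one])
  exact ⟨⟨f, g, hfg, hg⟩, rfl⟩

end Wiener

namespace Wiener

variable {B : Type*} [NormedRing B] [NormedAlgebra ℂ B]

/-! ### The geometric series `1 / (1 - ρ X)` -/

/-- The formal series `1 / (1 - ρ X) = ∑ ρⁿ Xⁿ`. For `|ρ| = 1` it does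
not lie in the Wiener algebra (unless `B = 0`), hence the use of formal power series. -/
noncomputable def geo (B : Type*) [NormedRing B] [NormedAlgebra ℂ B] (ρ : ℂ) : PowerSeries B :=
  PowerSeries.mk fun n => ρ ^ n • (1 : B)

lemma coeff_geo (ρ : ℂ) (n : ℕ) : PowerSeries.coeff n (geo B ρ) = ρ ^ n • (1 : B) :=
  PowerSeries.coeff_mk _ _

lemma geo_eq (ρ : ℂ) : geo B ρ = 1 + ρ • (PowerSeries.X * geo B ρ) := by
  ext n
  rw [map_add, PowerSeries.coeff_smul, coeff_geo]
  cases n with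
  | zero => simp
  | succ n => simp [PowerSeries.coeff_succ_X_mul, coeff_geo, PowerSeries.coeff_one, smul_smul,
      pow_succ']

lemma geo_commute (ρ : ℂ) (f : PowerSeries B) : Commute f (geo B ρ) := by
  refine PowerSeries.ext fun n => ?_
  rw [PowerSeries.coeff_mul, PowerSeries.coeff_mul, ← Finset.Nat.sum_antidiagonal_swap]
  refine Finset.sum_congr rfl fun p _ => ?_
  simp [coeff_geo]

lemma coeff_geo_mul (ρ : ℂ) (f : PowerSeries B) (n : ℕ) :
    PowerSeries.coeff n (geo B ρ * f) =
      ∑ j ∈ Finset.range (n + 1), ρ ^ (n - j) • PowerSeries.coeff j f := by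
  rw [(geo_commute ρ f).symm.eq, PowerSeries.coeff_mul,
    Finset.Nat.sum_antidiagonal_eq_sum_range_succ_mk]
  refine Finset.sum_congr rfl fun p _ => ?_
  simp [coeff_geo]

lemma norm_coeff_geo_mul_le (ρ : ℂ) (hρ : ‖ρ‖ ≤ 1) (f : Wiener B) (n : ℕ) :
    ‖PowerSeries.coeff n (geo B ρ * ps f)‖ ≤ ‖f‖ := by
  rw [coeff_geo_mul, norm_def]
  refine (norm_sum_le _ _).trans (le_trans ?_
    ((summable_cf f).sum_le_tsum (Finset.range (n + 1)) fun _ _ => norm_nonneg _))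
  refine Finset.sum_le_sum fun j _ => ?_
  rw [norm_smul, norm_pow]
  exact mul_le_of_le_one_left (norm_nonneg _) (pow_le_one₀ (norm_nonneg _) hρ)

/-- The series `(1 - ρ) X / (1 - ρ X)` is bounded in the Wiener algebra when `ρ` stays in a Stolz
angle at `1`, the point `ρ = 1` (where the series vanishes) included. -/
lemma exists_q (ρ : ℂ) (K : ℝ) (hK : 0 ≤ K) (h : ‖1 - ρ‖ ≤ K * (1 - ‖ρ‖)) :
    ∃ q : Wiener B, ps q = (1 - ρ) • (PowerSeries.X * geo B ρ) ∧ ‖q‖ ≤ K * ‖(1 : B)‖ := by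
  set a : ℕ → B := fun n => PowerSeries.coeff n ((1 - ρ) • (PowerSeries.X * geo B ρ)) with ha
  have ha0 : a 0 = 0 := by
    rw [ha]; simp only [PowerSeries.coeff_smul]; simp
  have ha1 : ∀ n, ‖a (n + 1)‖ = ‖1 - ρ‖ * ‖(1 : B)‖ * ‖ρ‖ ^ n := fun n => by
    rw [ha]
    simp only [PowerSeries.coeff_smul, PowerSeries.coeff_succ_X_mul, coeff_geo, norm_smul, norm_pow]
    ring
  have hs : HasSum (fun n => ‖a (n + 1)‖) (‖1 - ρ‖ * ‖(1 : B)‖ * (1 - ‖ρ‖)⁻¹) := by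
    simp only [ha1]
    by_cases h1 : ‖ρ‖ < 1
    · exact (hasSum_geometric_of_lt_one (norm_nonneg _) h1).mul_left _
    · have : ‖1 - ρ‖ = 0 := le_antisymm (h.trans (mul_nonpos_of_nonneg_of_nonpos hK
        (by linarith))) (norm_nonneg _)
      simp [this]
  have hs2 : Summable fun n => ‖a n‖ := (summable_nat_add_iff 1).1 hs.summable
  refine ⟨ofSeq a hs2, PowerSeries.ext fun n => cf_ofSeq a hs2 n, ?_⟩
  rw [norm_def]
  simp only [cf_ofSeq]
  rw [hs2.tsum_eq_zero_add, ha0, norm_zero, zero_add, hs.tsum_eq]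
  by_cases h1 : ‖ρ‖ < 1
  · rw [mul_assoc, mul_comm ‖(1 : B)‖, ← mul_assoc]
    refine mul_le_mul_of_nonneg_right ?_ (norm_nonneg _)
    rw [← div_eq_mul_inv, div_le_iff₀ (by linarith)]
    exact h
  · have : ‖1 - ρ‖ = 0 := le_antisymm (h.trans (mul_nonpos_of_nonneg_of_nonpos hK
        (by linarith))) (norm_nonneg _)
    rw [this]; simpa using mul_nonneg hK (norm_nonneg _)

lemma commute_of_ps_eq {ρ : ℂ} {q : Wiener B}
    (hq : ps q = (1 - ρ) • (PowerSeries.X * geo B ρ)) (f : Wiener B) : Commute f q := by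
  refine ps_injective ?_
  rw [map_mul, map_mul, hq]
  exact (((PowerSeries.commute_X (ps f)).mul_right (geo_commute ρ (ps f))).smul_right (1 - ρ)).eq

/-- `(1 - X) / (1 - ρ X) = 1 - q`. -/
lemma one_sub_X_mul_geo {ρ : ℂ} {q : Wiener B}
    (hq : ps q = (1 - ρ) • (PowerSeries.X * geo B ρ)) :
    (1 - PowerSeries.X) * geo B ρ = 1 - ps q := by
  rw [hq, sub_mul, one_mul, sub_smul, one_smul]
  nth_rewrite 1 [geo_eq]
  abel

/-- `(1 - ρ) / (1 - ρ X) = q + (1 - ρ) (1 - q)`. -/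
lemma smul_geo {ρ : ℂ} {q : Wiener B}
    (hq : ps q = (1 - ρ) • (PowerSeries.X * geo B ρ)) :
    (1 - ρ) • geo B ρ = ps q + (1 - ρ) • (1 - ps q) := by
  rw [← one_sub_X_mul_geo hq, sub_mul, one_mul, hq, smul_sub]
  abel

/-- `(1 - X) q = (1 - ρ) X (1 - q)`. -/
lemma one_sub_X_mul_q {ρ : ℂ} {q : Wiener B}
    (hq : ps q = (1 - ρ) • (PowerSeries.X * geo B ρ)) :
    (1 - X) * q = (1 - ρ) • (X * (1 - q)) := by
  refine ps_injective ?_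
  simp only [map_mul, map_sub, map_one, map_smul, ps_X]
  rw [← one_sub_X_mul_geo hq, hq, mul_smul_comm]
  congr 1
  noncomm_ring

/-! ### The renewal series and its divided difference -/

/-- The series `∑ aₖ Xᵏ`. -/
noncomputable def ser (a : ℕ → B) : Wiener B := ∑' k, C (a k) * X ^ k

/-- The series `∑ aₖ (1 + X + ⋯ + Xᵏ⁻¹)`, the divided difference at `1` of `∑ aₖ Xᵏ`. -/
noncomputable def dser (a : ℕ → B) : Wiener B := ∑' k, C (a k) * ∑ i ∈ Finset.range k, X ^ i

lemma norm_C_mul_geom_le (b : B) (k : ℕ) :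
    ‖C b * ∑ i ∈ Finset.range k, X ^ i‖ ≤ k * ‖b‖ := by
  rw [Finset.mul_sum]
  refine (norm_sum_le _ _).trans ?_
  simp [norm_C_mul_X_pow]

lemma summable_of_summable_nat_mul {s : ℕ → ℝ} (h0 : ∀ n, 0 ≤ s n)
    (hs : Summable fun n : ℕ => (n : ℝ) * s n) : Summable s := by
  rw [← summable_nat_add_iff 1] at hs ⊢
  refine Summable.of_nonneg_of_le (fun n => h0 _) (fun n => ?_) hs
  have := h0 (n + 1)
  push_cast
  nlinarith [(Nat.cast_nonneg n : (0 : ℝ) ≤ n)]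

variable [CompleteSpace B]

section

variable {a : ℕ → B}

lemma hasSum_ser (ha : Summable fun n : ℕ => (n : ℝ) * ‖a n‖)
    : HasSum (fun k => C (a k) * X ^ k) (ser a) :=
  (Summable.of_norm (by simpa only [norm_C_mul_X_pow] using
    summable_of_summable_nat_mul (fun n => norm_nonneg _) ha)).hasSum

lemma hasSum_dser (ha : Summable fun n : ℕ => (n : ℝ) * ‖a n‖)
    : HasSum (fun k => C (a k) * ∑ i ∈ Finset.range k, X ^ i) (dser a) :=
  (Summable.of_norm (Summable.of_nonneg_of_le (fun _ => norm_nonneg _)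
    (fun k => norm_C_mul_geom_le (a k) k) ha)).hasSum

lemma ps_ser (ha : Summable fun n : ℕ => (n : ℝ) * ‖a n‖)
    : ps (ser a) = PowerSeries.mk a := by
  have h := summable_of_summable_nat_mul (fun n => norm_nonneg _) ha
  have h1 := hasSum_monomials (ofSeq a h)
  simp only [cf_ofSeq] at h1
  rw [(hasSum_ser ha).unique h1]
  rfl

lemma ev_ser (ha : Summable fun n : ℕ => (n : ℝ) * ‖a n‖)
    (z : ℂ) (hz : ‖z‖ ≤ 1) : ev z hz (ser a) = ∑' n, z ^ n • a n := by
  have h := (hasSum_ser ha).map (ev z hz) (continuous_ev z hz)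
  simpa [Function.comp_def] using h.tsum_eq.symm

lemma ev_one_dser (ha : Summable fun n : ℕ => (n : ℝ) * ‖a n‖)
    (h1 : ‖(1 : ℂ)‖ ≤ 1) : ev 1 h1 (dser a) = ∑' n : ℕ, (n : ℂ) • a n := by
  have h := (hasSum_dser ha).map (ev 1 h1) (continuous_ev 1 h1)
  rw [← h.tsum_eq]
  refine tsum_congr fun n => ?_
  simp only [Function.comp_apply, map_mul, map_sum, map_pow, ev_X, ev_C]
  simp [← Nat.cast_comm, Nat.cast_smul_eq_nsmul]

lemma one_sub_X_mul_dser (ha : Summable fun n : ℕ => (n : ℝ) * ‖a n‖)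
    : (1 - X) * dser a = C (∑' n, a n) - ser a := by
  have h1 := (hasSum_dser ha).mul_left (1 - X)
  have h2 : HasSum (fun k => C (a k)) (C (∑' n, a n)) :=
    CL.hasSum (summable_of_summable_nat_mul (fun n => norm_nonneg _) ha).of_norm.hasSum
  have h3 : (fun k => (1 - X) * (C (a k) * ∑ i ∈ Finset.range k, X ^ i)) =
      fun k => C (a k) - C (a k) * X ^ k := funext fun k => by
    have h3 : Commute (C (a k)) (1 - X) := (Commute.one_right _).sub_right (commute_X _)
    rw [← mul_assoc, ← h3.eq, mul_assoc, mul_neg_geom_sum, mul_sub, mul_one]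
  rw [h3] at h1
  exact h1.unique (h2.sub (hasSum_ser ha))

end

variable {ι : Type*} {l : Filter ι} {R : ℕ → B} {Rt : ι → ℕ → B} {s : ℕ → ℝ}

lemma tendsto_ser (hs : Summable fun n : ℕ => (n : ℝ) * s n) (h0 : ∀ n, 0 ≤ s n)
    (hb : ∀ᶠ t in l, ∀ n, ‖Rt t n‖ ≤ s n) (hc : ∀ n, Tendsto (fun t => Rt t n) l (𝓝 (R n))) :
    Tendsto (fun t => ser (Rt t)) l (𝓝 (ser R)) := by
  refine tendsto_tsum_of_dominated_convergence (summable_of_summable_nat_mul h0 hs)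
    (fun k => ((continuous_C.tendsto _).comp (hc k)).mul_const _) ?_
  filter_upwards [hb] with t ht k
  rw [norm_C_mul_X_pow]; exact ht k

lemma tendsto_dser (hs : Summable fun n : ℕ => (n : ℝ) * s n)
    (hb : ∀ᶠ t in l, ∀ n, ‖Rt t n‖ ≤ s n) (hc : ∀ n, Tendsto (fun t => Rt t n) l (𝓝 (R n))) :
    Tendsto (fun t => dser (Rt t)) l (𝓝 (dser R)) := by
  refine tendsto_tsum_of_dominated_convergence hs
    (fun k => ((continuous_C.tendsto _).comp (hc k)).mul_const _) ?_
  filter_upwards [hb] with t ht k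
  exact (norm_C_mul_geom_le _ _).trans (mul_le_mul_of_nonneg_left (ht k) (Nat.cast_nonneg k))

/-! ### Limits involving the geometric series -/

/-- Multiplication by `q = (1 - ρ) X / (1 - ρ X)` tends strongly to `0` on series vanishing
at `1`, as `ρ → 1`. -/
lemma tendsto_q_mul {ρ : ι → ℂ} {q : ι → Wiener B} {K : ℝ} (hρ : Tendsto ρ l (𝓝 1))
    (hq : ∀ᶠ t in l, ps (q t) = (1 - ρ t) • (PowerSeries.X * geo B (ρ t)) ∧ ‖q t‖ ≤ K)
    (h : Wiener B) (h1 : ‖(1 : ℂ)‖ ≤ 1) (hh : ev 1 h1 h = 0) :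
    Tendsto (fun t => q t * h) l (𝓝 0) := by
  have hsum : HasSum (fun n => C (h.cf n) * (X ^ n - 1)) h := by
    have h2 : HasSum (fun n => C (h.cf n)) (C (ev 1 h1 h)) := by
      have h3 := CL.hasSum (summable_eval 1 h1 h).of_norm.hasSum
      simp only [one_pow, one_smul] at h3
      simp only [ev_apply, one_pow, one_smul]
      exact h3
    simpa only [hh, map_zero, sub_zero, mul_sub, mul_one] using (hasSum_monomials h).sub h2
  have hterm : ∀ n, Tendsto (fun t => q t * (C (h.cf n) * (X ^ n - 1))) l (𝓝 0) := fun n => by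
    -- `‖q (1 - X)‖ = O(|1 - ρ|)`
    have e1 : Tendsto (fun t => (1 - X) * q t) l (𝓝 0) := by
      have hz : Tendsto (fun t => ‖1 - ρ t‖ * (‖(1 : Wiener B)‖ + K)) l (𝓝 0) := by
        have : Tendsto (fun t => ‖1 - ρ t‖) l (𝓝 0) := by
          simpa using (tendsto_const_nhds.sub hρ : Tendsto (fun t => 1 - ρ t) l (𝓝 (1 - 1))).norm
        simpa using this.mul_const (‖(1 : Wiener B)‖ + K)
      refine squeeze_zero_norm' ?_ hz
      filter_upwards [hq] with t ht
      rw [one_sub_X_mul_q ht.1, norm_smul, norm_X_mul]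
      gcongr
      exact (norm_sub_le _ _).trans (by linarith [ht.2])
    have e2 := ((e1.mul_const (∑ i ∈ Finset.range n, X ^ i)).const_mul (C (h.cf n))).neg
    simp only [zero_mul, mul_zero, neg_zero] at e2
    refine e2.congr' ?_
    filter_upwards [hq] with t ht
    have c1 := commute_of_ps_eq ht.1
    have : (1 - X : Wiener B) * q t * ∑ i ∈ Finset.range n, X ^ i = q t * (1 - X ^ n) := by
      rw [(c1 _).eq, mul_assoc, mul_neg_geom_sum]
    rw [this, ← mul_assoc, (c1 _).eq, mul_assoc, ← mul_neg, ← mul_neg, neg_sub]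
  have hs : Summable fun n => K * (‖h.cf n‖ + ‖h.cf n‖) :=
    ((summable_cf h).add (summable_cf h)).mul_left K
  have key := tendsto_tsum_of_dominated_convergence (𝓕 := l) hs hterm (by
    filter_upwards [hq] with t ht n
    refine (norm_mul_le _ _).trans ?_
    refine mul_le_mul ht.2 ?_ (norm_nonneg _) ((norm_nonneg _).trans ht.2)
    rw [mul_sub, mul_one]
    refine (norm_sub_le _ _).trans ?_
    rw [norm_C_mul_X_pow, norm_C])
  simp only [tsum_zero] at key
  refine key.congr fun t => ?_
  exact (hsum.mul_left (q t)).tsum_eq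

/-- The coefficients of `V / (1 - ρ X)` are asymptotic to `ρⁿ V(1)` as `ρ → 1` and `n → ∞`. -/
lemma tendsto_coeff_geo_mul {ρ : ι → ℂ} (hρ : Tendsto ρ l (𝓝 1)) (hρ1 : ∀ᶠ t in l, ‖ρ t‖ ≤ 1)
    (V : Wiener B) (h1 : ‖(1 : ℂ)‖ ≤ 1) :
    Tendsto (fun p : ι × ℕ => PowerSeries.coeff p.2 (geo B (ρ p.1) * ps V)
      - ρ p.1 ^ p.2 • ev 1 h1 V) (l ×ˢ atTop) (𝓝 0) := by
  have hρ1' : ∀ᶠ p : ι × ℕ in l ×ˢ atTop, ‖ρ p.1‖ ≤ 1 := tendsto_fst.eventually hρ1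
  have key := tendsto_tsum_of_dominated_convergence (𝓕 := l ×ˢ (atTop : Filter ℕ))
    (f := fun (p : ι × ℕ) (j : ℕ) =>
      ((if j ≤ p.2 then ρ p.1 ^ (p.2 - j) else 0) - ρ p.1 ^ p.2) • V.cf j)
    (g := fun _ => 0) (bound := fun j => 2 * ‖V.cf j‖) ((summable_cf V).mul_left 2) (by
      intro j
      have hz : Tendsto (fun p : ι × ℕ => ‖1 - ρ p.1 ^ j‖ * ‖V.cf j‖) (l ×ˢ atTop) (𝓝 0) := by
        have e : Tendsto (fun p : ι × ℕ => 1 - ρ p.1 ^ j) (l ×ˢ atTop) (𝓝 (1 - 1 ^ j)) :=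
          tendsto_const_nhds.sub ((hρ.comp tendsto_fst).pow j)
        simpa using e.norm.mul_const ‖V.cf j‖
      refine squeeze_zero_norm' ?_ hz
      filter_upwards [hρ1', tendsto_snd.eventually (eventually_ge_atTop j)] with p hp hj
      rw [if_pos hj, norm_smul]
      refine mul_le_mul_of_nonneg_right ?_ (norm_nonneg _)
      have : ρ p.1 ^ (p.2 - j) - ρ p.1 ^ p.2 = ρ p.1 ^ (p.2 - j) * (1 - ρ p.1 ^ j) := by
        rw [mul_sub, mul_one, ← pow_add, Nat.sub_add_cancel hj]
      rw [this, norm_mul, norm_pow]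
      exact mul_le_of_le_one_left (norm_nonneg _) (pow_le_one₀ (norm_nonneg _) hp)) (by
      filter_upwards [hρ1'] with p hp j
      rw [norm_smul]
      refine mul_le_mul_of_nonneg_right ?_ (norm_nonneg _)
      have e : ∀ k, ‖ρ p.1 ^ k‖ ≤ 1 := fun k => by
        rw [norm_pow]; exact pow_le_one₀ (norm_nonneg _) hp
      refine (norm_sub_le _ _).trans ?_
      split_ifs
      · linarith [e p.2, e (p.2 - j)]
      · rw [norm_zero]; linarith [e p.2])
  simp only [tsum_zero] at key
  refine key.congr fun p => ?_
  have hV : Summable V.cf := (summable_cf V).of_norm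
  have e1 : ρ p.1 ^ p.2 • ev 1 h1 V = ∑' j, ρ p.1 ^ p.2 • V.cf j := by
    rw [hV.tsum_const_smul, ev_apply]; simp
  have hne : ∀ j ∉ Finset.range (p.2 + 1),
      (if j ≤ p.2 then ρ p.1 ^ (p.2 - j) else 0) • V.cf j = 0 := fun j hj => by
    rw [if_neg (by simpa using hj), zero_smul]
  have e2 : PowerSeries.coeff p.2 (geo B (ρ p.1) * ps V) =
      ∑' j, (if j ≤ p.2 then ρ p.1 ^ (p.2 - j) else 0) • V.cf j := by
    rw [coeff_geo_mul, tsum_eq_sum hne]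
    refine Finset.sum_congr rfl fun j hj => ?_
    rw [if_pos (by simpa [Nat.lt_succ_iff] using hj)]; rfl
  rw [e1, e2, ← (summable_of_ne_finset_zero hne).tsum_sub (hV.const_smul _)]
  simp only [sub_smul]

end Wiener

namespace Wiener

variable {B : Type*} [NormedRing B] [NormedAlgebra ℂ B] [CompleteSpace B]

/-! ### The regularized series -/

/-- The unperturbed regularized series `G P + (1 - R) W + (1 - R)(1 - P)`, where
`G = (R(1) - R) / (1 - X)`; it equals `(1 - R) (P / (1 - X) + W + (1 - P))` when `R(1) P = P`. -/
noncomputable def regular (R : ℕ → B) (P W : B) : Wiener B :=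
  dser R * C P + (1 - ser R) * C W + (1 - ser R) * C (1 - P)

/-- The regularized series is a unit: its value at `1` is `μ P + (1 - R(1))`, with inverse
`P / μ + Q`, and at `z ≠ 1` it is the product of the invertible elements `1 - R(z)` and
`P / (1 - z) + W + (1 - P)`. -/
lemma isUnit_regular {R : ℕ → B} (hR : Summable fun n : ℕ => (n : ℝ) * ‖R n‖) {P Q D : B}
    {μ : ℂ} (hμ : μ ≠ 0) (hPP : P * P = P) (hPR : P * ∑' n, R n = P) (hRP : (∑' n, R n) * P = P)
    (hQ1 : Q * (1 - ∑' n, R n) = 1 - P) (hQ2 : (1 - ∑' n, R n) * Q = 1 - P)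
    (hQP : Q * P = 0) (hPQ : P * Q = 0)
    (hinv : ∀ z : ℂ, ‖z‖ ≤ 1 → z ≠ 1 → IsUnit (1 - ∑' n, z ^ n • R n))
    (hD : ∑' n : ℕ, (n : ℂ) • R n = D) (hPDP : P * D * P = μ • P) :
    IsUnit (regular R P (-(Q * D * P))) := by
  refine isUnit_of_ev _ fun z hz => ?_
  set W := -(Q * D * P) with hW
  have hPW : P * W = 0 := by rw [hW, mul_neg, ← mul_assoc, ← mul_assoc, hPQ]; simp
  have hWP : W * P = W := by rw [hW, neg_mul, mul_assoc _ P P, hPP]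
  by_cases h1 : z = 1
  · subst h1
    have hser : ev 1 hz (ser R) = ∑' n, R n := by rw [ev_ser hR]; simp
    have e : ev 1 hz (regular R P W) = μ • P + (1 - ∑' n, R n) := by
      simp only [regular, map_add, map_mul, map_sub, map_one, ev_C, hser, ev_one_dser hR, hD]
      have : (1 - ∑' n, R n) * W = P * D * P - D * P := by
        rw [hW, mul_neg, ← mul_assoc, ← mul_assoc, hQ2]; noncomm_ring
      rw [this, hPDP, mul_sub (1 - ∑' n, R n), sub_mul 1 _ P, hRP]; simp
    rw [e]
    refine ⟨⟨_, μ⁻¹ • P + Q, ?_, ?_⟩, rfl⟩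
    · rw [mul_add, add_mul, add_mul, hQ2, smul_mul_smul_comm, hPP, mul_inv_cancel₀ hμ, one_smul,
        smul_mul_assoc, hPQ, mul_smul_comm, sub_mul, one_mul, hRP]
      simp
    · rw [mul_add, add_mul, add_mul, hQ1, smul_mul_smul_comm, hPP, inv_mul_cancel₀ hμ, one_smul,
        smul_mul_assoc, mul_smul_comm, hQP, mul_sub, mul_one, hPR]
      simp
  · have hz1 : (1 - z) ≠ 0 := sub_ne_zero.2 (Ne.symm h1)
    -- away from `1` the factorization of `regular` can be evaluated, and both factors are units
    have e : ev z hz (regular R P W) =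
        (1 - ∑' n, z ^ n • R n) * ((1 - z)⁻¹ • P + (W + (1 - P))) := by
      have h2 := congrArg (ev z hz) (one_sub_X_mul_dser hR)
      simp only [map_mul, map_sub, map_one, ev_X, ev_C, ev_ser hR] at h2
      have h3 : ev z hz (dser R) = (1 - z)⁻¹ • ((∑' n, R n) - ∑' n, z ^ n • R n) := by
        rw [← h2, sub_mul, smul_mul_assoc, one_mul]
        have : ev z hz (dser R) - z • ev z hz (dser R) = (1 - z) • ev z hz (dser R) := by
          rw [sub_smul, one_smul]
        rw [this, smul_smul, inv_mul_cancel₀ hz1, one_smul]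
      simp only [regular, map_add, map_mul, map_sub, map_one, ev_C, ev_ser hR, h3]
      rw [smul_mul_assoc, sub_mul, hRP, mul_add, mul_add, mul_smul_comm, sub_mul 1 _ P, one_mul]
      simp only [add_assoc]
    rw [e]
    refine (hinv z hz h1).mul ?_
    have hWW : W * W = 0 := by
      calc W * W = W * P * W := by rw [hWP]
        _ = 0 := by rw [mul_assoc, hPW, mul_zero]
    refine ⟨⟨_, (1 - z) • P + (1 - P) - (1 - z) • W, ?_, ?_⟩, rfl⟩
    all_goals
      simp only [mul_add, add_mul, mul_sub, sub_mul, smul_mul_assoc, mul_smul_comm, hPP, hPW, hWP,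
        hWW, mul_one, one_mul, smul_smul, inv_mul_cancel₀ hz1, mul_inv_cancel₀ hz1, one_smul,
        smul_zero, sub_self, smul_add, smul_sub]
      abel

/-- The perturbed regularized series as the product of `1 - R` and
`P / (1 - ρ X) + (1 - q) W + (1 - P₀)`. -/
lemma perturbed_factor {R : ℕ → B} (hR : Summable fun n : ℕ => (n : ℝ) * ‖R n‖) {P W P₀ : B}
    {lam ρ κ : ℂ} (hlam : 1 - lam = κ * (1 - ρ)) (heig : (∑' n, R n) * P = lam • P)
    {q : Wiener B} (hq : ps q = (1 - ρ) • (PowerSeries.X * geo B ρ)) :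
    (1 - ps (ser R)) * (geo B ρ * ps (C P) + ps ((1 - q) * C W + C (1 - P₀))) =
      ps (κ • ((q + (1 - ρ) • (1 - q)) * C P) +
        (1 - q) * (dser R * C P + (1 - ser R) * C W) + (1 - ser R) * C (1 - P₀)) := by
  have e1 : (1 - ser R) * C P = (1 - lam) • C P + (1 - X) * dser R * C P := by
    rw [one_sub_X_mul_dser hR, sub_mul (C _), ← map_mul, heig, C_smul, sub_smul, sub_mul, one_mul, one_smul]
    abel
  have e1' := congrArg ps e1
  simp only [map_mul, map_sub, map_add, map_one, map_smul, ps_X] at e1'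
  have e2 : (1 - ps (ser R)) * (geo B ρ * ps (C P)) =
      κ • ((ps q + (1 - ρ) • (1 - ps q)) * ps (C P)) + (1 - ps q) * (ps (dser R) * ps (C P)) := by
    rw [← mul_assoc, (geo_commute ρ _).eq, mul_assoc, e1', mul_add, ← smul_geo hq,
      ← one_sub_X_mul_geo hq, hlam, ← (geo_commute ρ (1 - PowerSeries.X)).symm.eq]
    simp only [mul_smul, mul_smul_comm, smul_mul_assoc, mul_assoc]
  have e3 : (1 - ps (ser R)) * ((1 - ps q) * ps (C W)) =
      (1 - ps q) * ((1 - ps (ser R)) * ps (C W)) := by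
    have := congrArg ps ((Commute.one_right (1 - ser R)).sub_right
      (commute_of_ps_eq hq (1 - ser R))).eq
    simp only [map_mul, map_sub, map_one] at this
    rw [← mul_assoc, this, mul_assoc]
  simp only [map_mul, map_add, map_sub, map_one, map_smul] at *
  rw [mul_add, mul_add, e2, e3, mul_add]
  simp only [add_assoc]

variable {ι : Type*} {l : Filter ι}

/-- The perturbative renewal estimate in a Banach algebra: `1 - ∑ Rt t n Xⁿ` has a formal right
inverse whose coefficients are uniformly bounded and asymptotic to `ρⁿ P / μ`, jointly as `t` follows
`l` and `n → ∞`. The eigenvalue enters through `1 - lam = κ (1 - ρ)`, and `hρK` says that `ρ` stays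
in a Stolz angle at `1`. -/
theorem renewal_core [l.NeBot] {R : ℕ → B} {Rt : ι → ℕ → B} {s : ℕ → ℝ}
    (hs : Summable fun n : ℕ => (n : ℝ) * s n) (h0 : ∀ n, 0 ≤ s n) (hRs : ∀ n, ‖R n‖ ≤ s n)
    (hb : ∀ᶠ t in l, ∀ n, ‖Rt t n‖ ≤ s n) (hc : ∀ n, Tendsto (fun t => Rt t n) l (𝓝 (R n)))
    {P Q D : B} {μ : ℂ} (hμ : μ ≠ 0) (hPP : P * P = P) (hPR : P * ∑' n, R n = P)
    (hRP : (∑' n, R n) * P = P) (hQ1 : Q * (1 - ∑' n, R n) = 1 - P)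
    (hQ2 : (1 - ∑' n, R n) * Q = 1 - P) (hQP : Q * P = 0) (hPQ : P * Q = 0)
    (hinv : ∀ z : ℂ, ‖z‖ ≤ 1 → z ≠ 1 → IsUnit (1 - ∑' n, z ^ n • R n))
    (hD : ∑' n : ℕ, (n : ℂ) • R n = D) (hPDP : P * D * P = μ • P)
    {Pt : ι → B} (hPt : Tendsto Pt l (𝓝 P)) {lam ρ κ : ι → ℂ} (hρ : Tendsto ρ l (𝓝 1))
    (hκ : Tendsto κ l (𝓝 μ)) (hlam : ∀ᶠ t in l, 1 - lam t = κ t * (1 - ρ t))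
    (heig : ∀ᶠ t in l, (∑' n, Rt t n) * Pt t = lam t • Pt t)
    {K : ℝ} (hK : 0 ≤ K) (hρK : ∀ᶠ t in l, ‖1 - ρ t‖ ≤ K * (1 - ‖ρ t‖))
    (hρ1 : ∀ᶠ t in l, ‖ρ t‖ ≤ 1) :
    ∃ T : ι → PowerSeries B, (∀ᶠ t in l, (1 - PowerSeries.mk (Rt t)) * T t = 1) ∧
      (∃ K' : ℝ, ∀ᶠ t in l, ∀ n, ‖PowerSeries.coeff n (T t)‖ ≤ K') ∧
      Tendsto (fun p : ι × ℕ => PowerSeries.coeff p.2 (T p.1) - μ⁻¹ • (ρ p.1 ^ p.2 • P))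
        (l ×ˢ atTop) (𝓝 0) := by
  have hR : Summable fun n : ℕ => (n : ℝ) * ‖R n‖ :=
    Summable.of_nonneg_of_le (fun n => by positivity)
      (fun n => mul_le_mul_of_nonneg_left (hRs n) (Nat.cast_nonneg n)) hs
  have hRt : ∀ᶠ t in l, Summable fun n : ℕ => (n : ℝ) * ‖Rt t n‖ := by
    filter_upwards [hb] with t ht
    exact Summable.of_nonneg_of_le (fun n => by positivity)
      (fun n => mul_le_mul_of_nonneg_left (ht n) (Nat.cast_nonneg n)) hs
  set W := -(Q * D * P) with hW
  have h1 : ‖(1 : ℂ)‖ ≤ 1 := by simp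
  obtain ⟨q, hq⟩ : ∃ q : ι → Wiener B, ∀ᶠ t in l,
      ps (q t) = (1 - ρ t) • (PowerSeries.X * geo B (ρ t)) ∧ ‖q t‖ ≤ K * ‖(1 : B)‖ :=
    (hρK.mono fun t ht => exists_q (ρ t) K hK ht).choice
  -- the regularized series `N t` and its limit
  set H : ι → Wiener B := fun t => dser (Rt t) * C (Pt t) + (1 - ser (Rt t)) * C W with hH
  set N : ι → Wiener B := fun t => κ t • ((q t + (1 - ρ t) • (1 - q t)) * C (Pt t)) +
        (1 - q t) * H t + (1 - ser (Rt t)) * C (1 - P) with hN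
  have hser := tendsto_ser hs h0 hb hc
  have hdser := tendsto_dser hs hb hc
  have hCP : Tendsto (fun t => C (Pt t)) l (𝓝 (C P)) := (continuous_C.tendsto P).comp hPt
  have hHlim : Tendsto H l (𝓝 (dser R * C P + (1 - ser R) * C W)) :=
    (hdser.mul hCP).add ((hser.const_sub 1).mul_const _)
  have h1ρ : Tendsto (fun t => 1 - ρ t) l (𝓝 0) := by simpa using hρ.const_sub 1
  have hqb : IsBoundedUnder (· ≤ ·) l (fun t => ‖q t‖) :=
    ⟨K * ‖(1 : B)‖, eventually_map.2 (hq.mono fun t ht => ht.2)⟩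
  have hev : ev 1 h1 (μ • C P - (dser R * C P + (1 - ser R) * C W)) = 0 := by
    have hser1 : ev 1 h1 (ser R) = ∑' n, R n := by rw [ev_ser hR]; simp
    have : (1 - ∑' n, R n) * W = P * D * P - D * P := by
      rw [hW, mul_neg, ← mul_assoc, ← mul_assoc, hQ2]; noncomm_ring
    simp only [← C_smul, map_add, map_mul, map_sub, map_one, ev_C, hser1, ev_one_dser hR, hD]
    rw [this, hPDP]; simp
  have hNlim : Tendsto N l (𝓝 (regular R P W)) := by
    have a1 : Tendsto (fun t => q t * (κ t • C (Pt t) - H t -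
        (μ • C P - (dser R * C P + (1 - ser R) * C W)))) l (𝓝 0) := by
      have : Tendsto (fun t => κ t • C (Pt t) - H t -
        (μ • C P - (dser R * C P + (1 - ser R) * C W))) l (𝓝 0) := by
        simpa using ((hκ.smul hCP).sub hHlim).sub_const
          (μ • C P - (dser R * C P + (1 - ser R) * C W))
      exact isBoundedUnder_le_mul_tendsto_zero hqb this
    have a2 := tendsto_q_mul hρ hq _ h1 hev
    have a3 : Tendsto (fun t => q t * ((κ t * (1 - ρ t)) • C (Pt t))) l (𝓝 0) := by
      refine isBoundedUnder_le_mul_tendsto_zero hqb ?_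
      simpa using (hκ.mul h1ρ).smul hCP
    have a4 : Tendsto (fun t => (κ t * (1 - ρ t)) • C (Pt t)) l (𝓝 0) := by
      simpa using (hκ.mul h1ρ).smul hCP
    have a5 := (((a1.add a2).sub a3).add a4).add
      (hHlim.add ((hser.const_sub 1).mul_const (C (1 - P))))
    simp only [add_zero, sub_zero, zero_add] at a5
    refine a5.congr fun t => ?_
    simp only [hN]
    -- keeps `1 - ρ t` from being distributed over
    generalize 1 - ρ t = e
    simp only [mul_sub, sub_mul, mul_add, add_mul, smul_sub, smul_add, mul_smul_comm,
      smul_mul_assoc, one_mul, mul_smul]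
    abel
  have hU : IsUnit (regular R P W) :=
    isUnit_regular hR hμ hPP hPR hRP hQ1 hQ2 hQP hPQ hinv hD hPDP
  set V₀ := Ring.inverse (regular R P W) with hV₀
  have hVlim : Tendsto (fun t => Ring.inverse (N t)) l (𝓝 V₀) := by
    have := NormedRing.inverse_continuousAt hU.unit
    exact this.tendsto.comp hNlim
  have hNU : ∀ᶠ t in l, IsUnit (N t) := hNlim.eventually (Units.isOpen.mem_nhds hU)
  set V : ι → Wiener B := fun t => Ring.inverse (N t) with hV
  have hPV : P * ev 1 h1 V₀ = μ⁻¹ • P := by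
    have e1 : ev 1 h1 (regular R P W) * ev 1 h1 V₀ = 1 := by
      rw [← map_mul, Ring.mul_inverse_cancel _ hU, map_one]
    have hser1 : ev 1 h1 (ser R) = ∑' n, R n := by rw [ev_ser hR]; simp
    have e2 : P * ev 1 h1 (regular R P W) = μ • P := by
      simp only [regular, map_add, map_mul, map_sub, map_one, ev_C, hser1, ev_one_dser hR, hD]
      have e3 : P * (1 - ∑' n, R n) = 0 := by rw [mul_sub, mul_one, hPR, sub_self]
      rw [mul_add, mul_add, ← mul_assoc, ← mul_assoc, ← mul_assoc, e3, hPDP]; simp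
    have e4 : μ • (P * ev 1 h1 V₀) = P := by
      rw [← smul_mul_assoc, ← e2, mul_assoc, e1, mul_one]
    nth_rewrite 2 [← e4]
    rw [smul_smul, inv_mul_cancel₀ hμ, one_smul]
  set A : ι → Wiener B := fun t => (C W + C (1 - P)) * V t with hA
  set A₀ : Wiener B := (C W + C (1 - P)) * V₀ with hA₀
  have hAlim : Tendsto A l (𝓝 A₀) := hVlim.const_mul _
  set T : ι → PowerSeries B := fun t =>
    (geo B (ρ t) * ps (C (Pt t)) + ps ((1 - q t) * C W + C (1 - P))) * ps (V t) with hT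
  -- the decomposition of `T` from which all estimates are read off
  have hTdec : ∀ᶠ t in l, T t = geo B (ρ t) * ps (C (Pt t) * V t) + ps (A t) -
      (1 - ρ t) • (geo B (ρ t) * ps (X * (C W * V t))) := by
    filter_upwards [hq] with t ht
    have e : ps (q t) * (ps (C W) * ps (V t)) =
        (1 - ρ t) • (geo B (ρ t) * (PowerSeries.X * (ps (C W) * ps (V t)))) := by
      rw [ht.1, smul_mul_assoc, (geo_commute (ρ t) PowerSeries.X).eq, mul_assoc]
    simp only [hT, hA, map_mul, map_add, map_sub, map_one, ps_X]
    rw [← e]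
    noncomm_ring
  have hCV : Tendsto (fun t => C (Pt t) * V t) l (𝓝 (C P * V₀)) := hCP.mul hVlim
  have hXV : Tendsto (fun t => X * (C W * V t)) l (𝓝 (X * (C W * V₀))) :=
    (hVlim.const_mul _).const_mul _
  refine ⟨T, ?_, ?_, ?_⟩
  · filter_upwards [hRt, hq, hlam, heig, hNU] with t t1 t2 t3 t4 t5
    rw [← ps_ser t1, hT]
    dsimp only
    rw [← mul_assoc, perturbed_factor t1 t3 t4 t2.1, ← map_mul]
    change ps (N t * Ring.inverse (N t)) = 1
    rw [Ring.mul_inverse_cancel _ t5, map_one]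
  · refine ⟨(‖C P * V₀‖ + 1) + (‖A₀‖ + 1) + 1 * (‖X * (C W * V₀)‖ + 1), ?_⟩
    have b1 := hCV.norm.eventually (gt_mem_nhds (lt_add_one ‖C P * V₀‖))
    have b2 := hAlim.norm.eventually (gt_mem_nhds (lt_add_one ‖A₀‖))
    have b3 := hXV.norm.eventually (gt_mem_nhds (lt_add_one ‖X * (C W * V₀)‖))
    have b4 := h1ρ.norm.eventually (gt_mem_nhds (show ‖(0 : ℂ)‖ < 1 by simp))
    filter_upwards [hTdec, b1, b2, b3, b4, hρ1] with t t0 t1 t2 t3 t4 t5 n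
    rw [t0, map_sub, map_add, PowerSeries.coeff_smul]
    refine (norm_sub_le _ _).trans (add_le_add ((norm_add_le _ _).trans (add_le_add ?_ ?_)) ?_)
    · exact (norm_coeff_geo_mul_le _ t5 _ n).trans t1.le
    · exact (norm_cf_le _ n).trans t2.le
    · rw [norm_smul]
      exact mul_le_mul t4.le ((norm_coeff_geo_mul_le _ t5 _ n).trans t3.le) (norm_nonneg _)
        zero_le_one
  · have hfst : ∀ {p : ι → Prop}, (∀ᶠ t in l, p t) → ∀ᶠ x : ι × ℕ in l ×ˢ atTop, p x.1 :=
      fun h => tendsto_fst.eventually h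
    have c1 : Tendsto (fun p : ι × ℕ => PowerSeries.coeff p.2
        (geo B (ρ p.1) * ps (C (Pt p.1) * V p.1 - C P * V₀))) (l ×ˢ atTop) (𝓝 0) := by
      have : Tendsto (fun p : ι × ℕ => ‖C (Pt p.1) * V p.1 - C P * V₀‖) (l ×ˢ atTop) (𝓝 0) :=
        (tendsto_iff_norm_sub_tendsto_zero.1 hCV).comp tendsto_fst
      refine squeeze_zero_norm' ?_ this
      filter_upwards [hfst hρ1] with p hp
      exact norm_coeff_geo_mul_le _ hp _ _
    have c2 := tendsto_coeff_geo_mul hρ hρ1 (C P * V₀) h1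
    have c3 : Tendsto (fun p : ι × ℕ => (A p.1).cf p.2) (l ×ˢ atTop) (𝓝 0) := by
      have d1 : Tendsto (fun p : ι × ℕ => ‖A p.1 - A₀‖) (l ×ˢ atTop) (𝓝 0) :=
        (tendsto_iff_norm_sub_tendsto_zero.1 hAlim).comp tendsto_fst
      have d2 : Tendsto (fun p : ι × ℕ => ‖A₀.cf p.2‖) (l ×ˢ atTop) (𝓝 0) :=
        (summable_cf A₀).tendsto_atTop_zero.comp tendsto_snd
      have d3 := d1.add d2
      rw [add_zero] at d3
      refine squeeze_zero_norm (fun p => ?_) d3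
      have : (A p.1).cf p.2 = (A p.1 - A₀).cf p.2 + A₀.cf p.2 := by simp
      rw [this]
      exact (norm_add_le _ _).trans (add_le_add_left (norm_cf_le _ _) _)
    have c4 : Tendsto (fun p : ι × ℕ => (1 - ρ p.1) • PowerSeries.coeff p.2
        (geo B (ρ p.1) * ps (X * (C W * V p.1)))) (l ×ˢ atTop) (𝓝 0) := by
      have : Tendsto (fun p : ι × ℕ => ‖1 - ρ p.1‖ * ‖X * (C W * V p.1)‖) (l ×ˢ atTop) (𝓝 0) := by
        have := (h1ρ.norm.mul hXV.norm)
        simp only [norm_zero, zero_mul] at this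
        exact this.comp tendsto_fst
      refine squeeze_zero_norm' ?_ this
      filter_upwards [hfst hρ1] with p hp
      rw [norm_smul]
      exact mul_le_mul_of_nonneg_left (norm_coeff_geo_mul_le _ hp _ _) (norm_nonneg _)
    have c5 := ((c1.add c2).add c3).sub c4
    simp only [add_zero, sub_zero] at c5
    refine c5.congr' ?_
    filter_upwards [hfst hTdec] with p hp
    have e1 : ev 1 h1 (C P * V₀) = μ⁻¹ • P := by rw [map_mul, ev_C, hPV]
    rw [hp, e1, smul_comm (ρ p.1 ^ p.2) μ⁻¹ P, map_sub ps, mul_sub (geo B (ρ p.1))]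
    simp only [map_sub, map_add, PowerSeries.coeff_smul, cf]
    abel

end Wiener

/-! ### Pointwise inversion of the formal inverse -/

/-- A formal right inverse of `1 - ∑ aₙ Xⁿ` with bounded coefficients converges on the open unit
disk to the genuine inverse. Since `a₀ = 0` the formal right inverse is two-sided, so that the
value of the series is invertible. -/
lemma isUnit_and_hasSum_of_formal_inverse {B : Type*} [NormedRing B] [NormedAlgebra ℂ B]
    [CompleteSpace B] {a : ℕ → B} (ha0 : a 0 = 0) (ha : Summable fun n => ‖a n‖)
    {T : PowerSeries B} (hT : (1 - PowerSeries.mk a) * T = 1) {K : ℝ}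
    (hK : ∀ n, ‖PowerSeries.coeff n T‖ ≤ K) {z : ℂ} (hz : ‖z‖ < 1) :
    IsUnit (1 - ∑' n, z ^ n • a n) ∧
      HasSum (fun n => z ^ n • PowerSeries.coeff n T)
        (Ring.inverse (1 - ∑' n, z ^ n • a n)) := by
  set F : PowerSeries B := 1 - PowerSeries.mk a with hF
  have hFc : PowerSeries.constantCoeff F = ((1 : Bˣ) : B) := by
    rw [← PowerSeries.coeff_zero_eq_constantCoeff_apply, hF]
    simp [ha0]
  have hT' : T * F = 1 := by
    have h := PowerSeries.invOfUnit_mul F 1 hFc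
    have : PowerSeries.invOfUnit F 1 = T := by
      calc PowerSeries.invOfUnit F 1 = PowerSeries.invOfUnit F 1 * (F * T) := by rw [hT, mul_one]
        _ = T := by rw [← mul_assoc, h, one_mul]
    rwa [this] at h
  have hone : HasSum (fun n => z ^ n • PowerSeries.coeff n (1 : PowerSeries B)) 1 := by
    have := hasSum_single (f := fun n => z ^ n • PowerSeries.coeff n (1 : PowerSeries B)) 0
      (fun n hn => by simp [PowerSeries.coeff_one, hn])
    simpa using this
  have hle : ∀ n, ‖z ^ n • a n‖ ≤ ‖a n‖ := fun n => by
    rw [norm_smul, norm_pow]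
    exact mul_le_of_le_one_left (norm_nonneg _) (pow_le_one₀ (norm_nonneg _) hz.le)
  have hsa : Summable fun n => ‖z ^ n • a n‖ :=
    Summable.of_nonneg_of_le (fun _ => norm_nonneg _) hle ha
  have hFn : ∀ n, z ^ n • PowerSeries.coeff n F =
      z ^ n • PowerSeries.coeff n (1 : PowerSeries B) - z ^ n • a n := fun n => by
    rw [hF, map_sub, PowerSeries.coeff_mk, smul_sub]
  have hFs : Summable fun n => ‖z ^ n • PowerSeries.coeff n F‖ := by
    rw [← summable_nat_add_iff 1] at hsa ⊢
    refine hsa.congr fun n => ?_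
    rw [hFn]; simp [PowerSeries.coeff_one]
  have hTs : Summable fun n => ‖z ^ n • PowerSeries.coeff n T‖ := by
    refine Summable.of_nonneg_of_le (fun _ => norm_nonneg _) (fun n => ?_)
      ((summable_geometric_of_lt_one (norm_nonneg z) hz).mul_right K)
    rw [norm_smul, norm_pow]
    exact mul_le_mul_of_nonneg_left (hK n) (by positivity)
  have hFv : ∑' n, z ^ n • PowerSeries.coeff n F = 1 - ∑' n, z ^ n • a n := by
    simp only [hFn]
    rw [hone.summable.tsum_sub hsa.of_norm, hone.tsum_eq]
  have h1 := Wiener.tsum_coeff_mul z F T hFs hTs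
  have h2 := Wiener.tsum_coeff_mul z T F hTs hFs
  rw [hT, hone.tsum_eq, hFv] at h1
  rw [hT', hone.tsum_eq, hFv] at h2
  have hinv : Ring.inverse (1 - ∑' n, z ^ n • a n) = ∑' n, z ^ n • PowerSeries.coeff n T :=
    Ring.inverse_unit
      (⟨_, ∑' n, z ^ n • PowerSeries.coeff n T, h1.symm, h2.symm⟩ : Bˣ)
  refine ⟨⟨⟨_, _, h1.symm, h2.symm⟩, rfl⟩, ?_⟩
  rw [hinv]
  exact hTs.of_norm.hasSum

/-! ### The perturbed eigenprojection -/

/-- If `A t → A₀` and `A t` has an eigenvector for an eigenvalue `lam t → 1`, then `P` is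
the norm limit of operators `Pt t` whose range consists of such eigenvectors (and zero). With
`E t = Q ((1 - lam t) + (A t - A₀))`, every such eigenvector `v` satisfies `(1 - E t) v = P v`,
and `Pt t = (1 - E t)⁻¹ P`. -/
lemma exists_perturbed_eigenprojection {L : Type*} [NormedAddCommGroup L] [NormedSpace ℂ L]
    [CompleteSpace L] {ι : Type*} {l : Filter ι} {P Q A₀ : L →L[ℂ] L}
    (hPrank : Module.finrank ℂ (LinearMap.range (P : L →ₗ[ℂ] L)) = 1)
    (hQ : Q * (1 - A₀) = 1 - P) {A : ι → L →L[ℂ] L} (hA : Tendsto A l (𝓝 A₀))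
    {lam : ι → ℂ} (hlam : Tendsto lam l (𝓝 1))
    (hv : ∀ᶠ t in l, ∃ v : L, v ≠ 0 ∧ A t v = lam t • v) :
    ∃ Pt : ι → L →L[ℂ] L, Tendsto Pt l (𝓝 P) ∧ ∀ᶠ t in l, A t * Pt t = lam t • Pt t := by
  set E : ι → L →L[ℂ] L := fun t => Q * ((1 - lam t) • (1 : L →L[ℂ] L) + (A t - A₀)) with hE
  have hE0 : Tendsto (fun t => 1 - E t) l (𝓝 1) := by
    have h1 : Tendsto (fun t => (1 - lam t) • (1 : L →L[ℂ] L)) l (𝓝 0) := by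
      simpa using (hlam.const_sub 1).smul_const (1 : L →L[ℂ] L)
    have h2 : Tendsto (fun t => A t - A₀) l (𝓝 0) := by simpa using hA.sub_const A₀
    simpa [hE] using ((h1.add h2).const_mul Q).const_sub 1
  have hunit : ∀ᶠ t in l, IsUnit (1 - E t) := hE0.eventually (Units.isOpen.mem_nhds isUnit_one)
  refine ⟨fun t => Ring.inverse (1 - E t) * P, ?_, ?_⟩
  · have h := (NormedRing.inverse_continuousAt (1 : (L →L[ℂ] L)ˣ)).tendsto.comp hE0
    simpa [Function.comp_def] using h.mul_const P
  · filter_upwards [hv, hunit] with t ⟨v, hv0, hAv⟩ hu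
    have hEv : (1 - E t) v = P v := by
      have e1 : (Q * (1 - A₀)) v = (1 - P) v := by rw [hQ]
      have e2 : E t v = (Q * (1 - A₀)) v := by
        change Q ((1 - lam t) • v + (A t v - A₀ v)) = Q (v - A₀ v)
        rw [hAv, sub_smul, one_smul]
        congr 1
        abel
      change v - E t v = P v
      rw [e2, e1]
      exact sub_sub_cancel v (P v)
    have hinv : Ring.inverse (1 - E t) (P v) = v := by
      rw [← hEv]
      exact DFunLike.congr_fun (Ring.inverse_mul_cancel _ hu) v
    have hPv : P v ≠ 0 := fun h => hv0 (by rw [← hinv, h, map_zero])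
    have hspan := (finrank_eq_one_iff_of_nonzero'
      (⟨P v, LinearMap.mem_range_self (P : L →ₗ[ℂ] L) v⟩ : LinearMap.range (P : L →ₗ[ℂ] L))
      (by simpa using hPv)).1 hPrank
    ext x
    obtain ⟨k, hk⟩ := hspan ⟨P x, LinearMap.mem_range_self (P : L →ₗ[ℂ] L) x⟩
    have hk' : k • P v = P x := congrArg Subtype.val hk
    change A t (Ring.inverse (1 - E t) (P x)) = lam t • Ring.inverse (1 - E t) (P x)
    rw [← hk', map_smul, hinv, map_smul, hAv, smul_comm]

/-! ### Elementary estimates -/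

/-- The points `1 - d m`, with `Re d > 0` and small `m ≥ 0`, approach `1` nontangentially from
inside the unit disk. -/
lemma nontangential {d : ℂ} (hd : 0 < d.re) {m : ℝ} (hm : 0 ≤ m) (hsmall : ‖d‖ ^ 2 * m ≤ d.re) :
    ‖1 - d * (m : ℂ)‖ ≤ 1 ∧
      ‖1 - (1 - d * (m : ℂ))‖ ≤ 2 * ‖d‖ / d.re * (1 - ‖1 - d * (m : ℂ)‖) := by
  have hsq : ‖1 - d * (m : ℂ)‖ ^ 2 ≤ 1 - m * d.re := by
    have h1 : ‖1 - d * (m : ℂ)‖ ^ 2 = 1 - 2 * m * d.re + m * (‖d‖ ^ 2 * m) := by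
      rw [← Complex.normSq_eq_norm_sq, ← Complex.normSq_eq_norm_sq, Complex.normSq_apply,
        Complex.normSq_apply]
      simp
      ring
    rw [h1]
    nlinarith
  have hx := norm_nonneg (1 - d * (m : ℂ))
  set x := ‖1 - d * (m : ℂ)‖
  have hx1 : x ≤ 1 := by nlinarith [mul_nonneg hm hd.le]
  refine ⟨hx1, ?_⟩
  have hl : ‖1 - (1 - d * (m : ℂ))‖ = ‖d‖ * m := by
    rw [sub_sub_cancel, norm_mul, Complex.norm_real, Real.norm_of_nonneg hm]
  rw [hl, div_mul_eq_mul_div, le_div_iff₀ hd]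
  have : m * d.re ≤ 2 * (1 - x) := by nlinarith [sq_nonneg (1 - x)]
  nlinarith [mul_le_mul_of_nonneg_left this (norm_nonneg d)]

/-- A bounded error `D t n` that is jointly small for `t → 0`, `n → ∞` is dominated by a sum
`ε(t) + δ(n)`: charge `D t n` to `n` when `n |t| ≤ 1` and to `t` otherwise. -/
lemma exists_separated_bound {D : ℝ → ℕ → ℝ} (hD0 : ∀ t n, 0 ≤ D t n) {K : ℝ}
    (hDK : ∀ t n, D t n ≤ K)
    (hD : Tendsto (fun p : ℝ × ℕ => D p.1 p.2) (𝓝 0 ×ˢ atTop) (𝓝 0)) :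
    ∃ eps : ℝ → ℝ, ∃ del : ℕ → ℝ, Tendsto eps (𝓝 0) (𝓝 0) ∧ Tendsto del atTop (𝓝 0) ∧
      ∀ t n, D t n ≤ eps t + del n := by
  classical
  have hK : 0 ≤ K := (hD0 0 0).trans (hDK 0 0)
  set e : ℝ → ℕ → ℝ := fun t n => if n * |t| ≤ 1 then 0 else D t n with he
  set f : ℕ → ℝ → ℝ := fun n t => if n * |t| ≤ 1 then D t n else 0 with hf
  have e0 : ∀ t n, 0 ≤ e t n := fun t n => by
    simp only [he]; split_ifs
    exacts [le_rfl, hD0 t n]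
  have f0 : ∀ n t, 0 ≤ f n t := fun n t => by
    simp only [hf]; split_ifs
    exacts [hD0 t n, le_rfl]
  have eB : ∀ t, BddAbove (Set.range (e t)) := fun t => ⟨K, by
    rintro _ ⟨n, rfl⟩
    simp only [he]; split_ifs
    exacts [hK, hDK t n]⟩
  have fB : ∀ n, BddAbove (Set.range (f n)) := fun n => ⟨K, by
    rintro _ ⟨t, rfl⟩
    simp only [hf]; split_ifs
    exacts [hDK t n, hK]⟩
  have key : ∀ η > 0, ∃ δ > 0, ∃ N : ℕ, ∀ t n, |t| < δ → N ≤ n → D t n ≤ η := by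
    intro η hη
    have h := hD.eventually (gt_mem_nhds hη)
    obtain ⟨p, hp, q, hq, hpq⟩ := eventually_prod_iff.1 h
    obtain ⟨δ, hδ, hδp⟩ := Metric.eventually_nhds_iff.1 hp
    obtain ⟨N, hN⟩ := eventually_atTop.1 hq
    exact ⟨δ, hδ, N, fun t n ht hn => (hpq (hδp (by simpa using ht)) (hN n hn)).le⟩
  refine ⟨fun t => ⨆ n, e t n, fun n => ⨆ t, f n t, ?_, ?_, ?_⟩
  · rw [Metric.tendsto_nhds]
    intro η hη
    obtain ⟨δ, hδ, N, h⟩ := key (η / 2) (half_pos hη)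
    refine Metric.eventually_nhds_iff.2 ⟨min δ (1 / (N + 1)), by positivity, fun t ht => ?_⟩
    rw [Real.dist_0_eq_abs, lt_min_iff] at ht
    rw [Real.dist_0_eq_abs, abs_of_nonneg (Real.iSup_nonneg (e0 t))]
    refine lt_of_le_of_lt (ciSup_le fun n => ?_) (half_lt_self hη)
    simp only [he]
    split_ifs with hn
    · positivity
    · refine h t n ht.1 (le_of_not_gt fun hlt => hn ?_)
      have h1 : (n : ℝ) ≤ N + 1 := by
        have : (n : ℝ) < N := by exact_mod_cast hlt
        linarith
      have h2 : ((N : ℝ) + 1) * |t| ≤ 1 := by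
        have := (lt_div_iff₀ (by positivity : (0 : ℝ) < N + 1)).1 ht.2
        linarith
      exact (mul_le_mul_of_nonneg_right h1 (abs_nonneg t)).trans h2
  · rw [Metric.tendsto_atTop]
    intro η hη
    obtain ⟨δ, hδ, N, h⟩ := key (η / 2) (half_pos hη)
    obtain ⟨N', hN'⟩ := exists_nat_gt (1 / δ)
    refine ⟨max N N', fun n hn => ?_⟩
    rw [Real.dist_0_eq_abs, abs_of_nonneg (Real.iSup_nonneg (f0 n))]
    refine lt_of_le_of_lt (ciSup_le fun t => ?_) (half_lt_self hη)
    simp only [hf]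
    split_ifs with ht
    · refine h t n (lt_of_not_ge fun hle => ?_) ((le_max_left _ _).trans hn)
      have h1 : (N' : ℝ) ≤ n := by exact_mod_cast (le_max_right _ _).trans hn
      have h2 : 1 < n * δ := (div_lt_iff₀ hδ).1 (hN'.trans_le h1)
      have h3 := mul_le_mul_of_nonneg_left hle (Nat.cast_nonneg (α := ℝ) n)
      linarith
    · positivity
  · intro t n
    by_cases h : n * |t| ≤ 1
    · have h1 : D t n = f n t := by simp only [hf, if_pos h]
      have h2 : f n t ≤ ⨆ t, f n t := le_ciSup (fB n) t
      have h3 : 0 ≤ ⨆ n, e t n := Real.iSup_nonneg (e0 t)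
      linarith
    · have h1 : D t n = e t n := by simp only [he, if_neg h]
      have h2 : e t n ≤ ⨆ n, e t n := le_ciSup (eB t) n
      have h3 : 0 ≤ ⨆ t, f n t := Real.iSup_nonneg (f0 n)
      linarith

/-! ### The perturbative theorem -/

/-- Abstract perturbative theorem: under the renewal setup together with the perturbation
hypotheses, (1) there is `ε₀ > 0` such that `I - R(z,t)` is invertible for `|t| < ε₀` and
`z ∈ 𝔻`, with `(I - R(z,t))⁻¹ = Σ_n T_{n,t} zⁿ`, and (2) there are `ε(t) → 0` and
`δ̂(n) → 0` with `‖T_{n,t} - (1/μ)(1 - (c/μ)M(|t|))ⁿ P‖ ≤ ε(t) + δ̂(n)`. -/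
theorem abstract_perturbative_theorem {L : Type*} [NormedAddCommGroup L] [NormedSpace ℂ L]
    [CompleteSpace L]
    (R : ℕ → L →L[ℂ] L) (hR0 : R 0 = 0)
    (hRsum : Summable fun n : ℕ => (n : ℝ) * ‖R n‖)
    (P : L →L[ℂ] L) (hPne : P ≠ 0) (hPproj : P * P = P)
    (hPrank : Module.finrank ℂ (LinearMap.range (P : L →ₗ[ℂ] L)) = 1)
    (hPR : P * renewalRz R 1 = P) (hRP : renewalRz R 1 * P = P)
    (hker : ∃ Q : L →L[ℂ] L, Q * (1 - renewalRz R 1) = 1 - P ∧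
      (1 - renewalRz R 1) * Q = 1 - P ∧ Q * P = 0 ∧ P * Q = 0)
    (hinv : ∀ z : ℂ, ‖z‖ ≤ 1 → z ≠ 1 → IsUnit (1 - renewalRz R z))
    (μ : ℝ) (hμpos : 0 < μ)
    (hPRP : P * (∑' n : ℕ, (n : ℂ) • R n) * P = (μ : ℂ) • P)
    -- perturbation hypotheses
    (α₀ : ℝ) (hα₀ : 0 < α₀)
    (Rt : ℝ → ℕ → L →L[ℂ] L) (hRt0 : Rt 0 = R) (hRt00 : ∀ t, Rt t 0 = 0)
    (hRtcont : ∀ n, Tendsto (fun t => Rt t n) (𝓝 0) (𝓝 (R n)))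
    (C : ℝ) (hC : 0 < C) (r : ℕ → ℝ) (hrR : ∀ n, ‖R n‖ ≤ r n)
    (hrt : ∀ t ∈ Set.Icc (-α₀) α₀, ∀ n, ‖Rt t n‖ ≤ C * r n)
    (hrsum : Summable fun n : ℕ => (n : ℝ) * r n)
    (Mf : ℝ → ℝ) (hMcont : ContinuousOn Mf (Set.Ici 0))
    (hMzero : ∀ s ∈ Set.Ici (0:ℝ), (Mf s = 0 ↔ s = 0))
    (hMnonneg : ∀ s ∈ Set.Ici (0:ℝ), 0 ≤ Mf s)
    (c : ℂ) (hc : 0 < c.re)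
    (lam : ℂ → ℝ → ℂ) (δ : ℝ) (hδ : 0 < δ) (U : Set (ℂ × ℝ))
    (hU : U ∈ nhdsWithin ((1:ℂ), (0:ℝ)) (Metric.closedBall 0 1 ×ˢ Set.Icc (-α₀) α₀))
    (hUsub : U ⊆ Metric.closedBall 0 1 ×ˢ Set.Icc (-α₀) α₀)
    (hspec : ∀ p ∈ U,
      spectrum ℂ (renewalRzt Rt p.1 p.2) ∩ Metric.ball (1:ℂ) δ = {lam p.1 p.2})
    (hsimple : ∀ p ∈ U, ∃ Pp : L →L[ℂ] L, Pp ≠ 0 ∧ Pp * Pp = Pp ∧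
      Module.finrank ℂ (LinearMap.range (Pp : L →ₗ[ℂ] L)) = 1 ∧
      renewalRzt Rt p.1 p.2 * Pp = Pp * renewalRzt Rt p.1 p.2 ∧
      renewalRzt Rt p.1 p.2 * Pp = lam p.1 p.2 • Pp)
    (hlam1 : ∃ b : ℝ → ℂ, Tendsto b (𝓝 0) (𝓝 0) ∧
      ∀ᶠ t in 𝓝 (0:ℝ), lam 1 t = 1 - (c + b t) * ((Mf |t| : ℝ) : ℂ)) :
    ∃ ε₀ : ℝ, 0 < ε₀ ∧ ε₀ ≤ α₀ ∧
      ∃ T : ℝ → ℕ → L →L[ℂ] L,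
        (∀ t : ℝ, |t| < ε₀ → ∀ z ∈ Metric.ball (0:ℂ) 1,
          IsUnit (1 - renewalRzt Rt z t) ∧
          HasSum (fun n => z ^ n • T t n) (Ring.inverse (1 - renewalRzt Rt z t))) ∧
        ∃ eps : ℝ → ℝ, ∃ del : ℕ → ℝ,
          Tendsto eps (𝓝 0) (𝓝 0) ∧ Tendsto del atTop (𝓝 0) ∧
          ∀ t : ℝ, |t| < ε₀ → ∀ n : ℕ, 1 ≤ n →
            ‖T t n - ((μ : ℂ))⁻¹ •
                ((1 - (c / (μ : ℂ)) * ((Mf |t| : ℝ) : ℂ)) ^ n • P)‖ ≤ eps t + del n := by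
  obtain ⟨Q, hQ1, hQ2, hQP, hPQ⟩ := hker
  obtain ⟨b, hb0, hlamb⟩ := hlam1
  have hz1 : renewalRz R 1 = ∑' n, R n := by simp [renewalRz]
  have hzt1 : ∀ t, renewalRzt Rt 1 t = ∑' n, Rt t n := fun t => by simp [renewalRzt]
  rw [hz1] at hPR hRP hQ1 hQ2
  have hμ : (μ : ℂ) ≠ 0 := by exact_mod_cast hμpos.ne'
  have hc0 : c ≠ 0 := fun h => by simp [h] at hc
  have hr0 : ∀ n, 0 ≤ r n := fun n => (norm_nonneg _).trans (hrR n)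
  -- one summable weight dominating both `R` and all the `Rt t`
  set s : ℕ → ℝ := fun n => (C + 1) * r n with hs_def
  have hs : Summable fun n : ℕ => (n : ℝ) * s n := by
    refine (hrsum.mul_left (C + 1)).congr fun n => ?_
    simp only [hs_def]; ring
  have hs0 : ∀ n, 0 ≤ s n := fun n => mul_nonneg (by linarith) (hr0 n)
  have hRs : ∀ n, ‖R n‖ ≤ s n := fun n => by
    have := hrR n
    have := mul_nonneg hC.le (hr0 n)
    simp only [hs_def]; linarith
  have hIcc : ∀ᶠ t in 𝓝 (0 : ℝ), t ∈ Set.Icc (-α₀) α₀ :=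
    Icc_mem_nhds (by linarith) hα₀
  have hRts : ∀ᶠ t in 𝓝 (0 : ℝ), ∀ n, ‖Rt t n‖ ≤ s n := by
    filter_upwards [hIcc] with t ht n
    have := hrt t ht n
    have := hr0 n
    simp only [hs_def]; linarith
  have hsS : Summable s := Wiener.summable_of_summable_nat_mul hs0 hs
  have hA : Tendsto (fun t => ∑' n, Rt t n) (𝓝 0) (𝓝 (∑' n, R n)) :=
    tendsto_tsum_of_dominated_convergence hsS hRtcont hRts
  have hM : Tendsto (fun t : ℝ => Mf |t|) (𝓝 0) (𝓝 0) := by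
    have h0 : Mf 0 = 0 := (hMzero 0 Set.self_mem_Ici).2 rfl
    have h1 : Tendsto (fun t : ℝ => |t|) (𝓝 0) (𝓝[Set.Ici 0] 0) :=
      tendsto_nhdsWithin_iff.2 ⟨by simpa using (continuous_abs.tendsto (0 : ℝ)),
        Eventually.of_forall fun t => abs_nonneg t⟩
    have h2 : Tendsto Mf (𝓝[Set.Ici 0] 0) (𝓝 0) := by
      have := hMcont 0 Set.self_mem_Ici
      rwa [ContinuousWithinAt, h0] at this
    exact h2.comp h1
  have hMC : Tendsto (fun t : ℝ => ((Mf |t| : ℝ) : ℂ)) (𝓝 0) (𝓝 0) := by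
    simpa [Function.comp_def] using (Complex.continuous_ofReal.tendsto 0).comp hM
  set ρ : ℝ → ℂ := fun t => 1 - (c / (μ : ℂ)) * ((Mf |t| : ℝ) : ℂ) with hρ_def
  have hρ : Tendsto ρ (𝓝 0) (𝓝 1) := by
    simpa using (hMC.const_mul (c / (μ : ℂ))).const_sub 1
  set κ : ℝ → ℂ := fun t => μ * (1 + b t / c) with hκ_def
  have hκ : Tendsto κ (𝓝 0) (𝓝 μ) := by
    simpa using ((hb0.div_const c).const_add 1).const_mul (μ : ℂ)
  have hlamκ : ∀ᶠ t in 𝓝 (0 : ℝ), 1 - lam 1 t = κ t * (1 - ρ t) := by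
    filter_upwards [hlamb] with t ht
    rw [ht, hκ_def, hρ_def]
    field_simp
    ring
  have hlam : Tendsto (fun t => lam 1 t) (𝓝 0) (𝓝 1) := by
    have : Tendsto (fun t => 1 - (c + b t) * ((Mf |t| : ℝ) : ℂ)) (𝓝 0) (𝓝 1) := by
      simpa using ((hb0.const_add c).mul hMC).const_sub 1
    exact this.congr' (hlamb.mono fun t ht => ht.symm)
  have hUt : ∀ᶠ t in 𝓝 (0 : ℝ), ((1 : ℂ), t) ∈ U := by
    have : Tendsto (fun t : ℝ => ((1 : ℂ), t)) (𝓝 0)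
        (𝓝[Metric.closedBall 0 1 ×ˢ Set.Icc (-α₀) α₀] ((1 : ℂ), (0 : ℝ))) := by
      refine tendsto_nhdsWithin_iff.2 ⟨tendsto_const_nhds.prodMk_nhds tendsto_id, ?_⟩
      filter_upwards [hIcc] with t ht
      exact ⟨by simp, ht⟩
    exact this hU
  have hvec : ∀ᶠ t in 𝓝 (0 : ℝ), ∃ v : L, v ≠ 0 ∧ (∑' n, Rt t n) v = lam 1 t • v := by
    filter_upwards [hUt] with t ht
    obtain ⟨Pp, hne, -, -, -, heig⟩ := hsimple _ ht
    rw [hzt1] at heig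
    obtain ⟨x, hx⟩ : ∃ x, Pp x ≠ 0 := by
      by_contra! h
      exact hne (ContinuousLinearMap.ext h)
    exact ⟨Pp x, hx, DFunLike.congr_fun heig x⟩
  obtain ⟨Pt, hPt, heig⟩ := exists_perturbed_eigenprojection hPrank hQ1 hA hlam hvec
  have hd : 0 < (c / (μ : ℂ)).re := by
    rw [Complex.div_ofReal_re]; positivity
  have hnt : ∀ᶠ t in 𝓝 (0 : ℝ), ‖ρ t‖ ≤ 1 ∧
      ‖1 - ρ t‖ ≤ 2 * ‖c / (μ : ℂ)‖ / (c / (μ : ℂ)).re * (1 - ‖ρ t‖) := by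
    have h := hM.const_mul (‖c / (μ : ℂ)‖ ^ 2)
    rw [mul_zero] at h
    filter_upwards [h.eventually (gt_mem_nhds hd)] with t ht
    exact nontangential hd (hMnonneg _ (abs_nonneg t)) ht.le
  obtain ⟨T, hT1, ⟨K, hK⟩, hT2⟩ := Wiener.renewal_core (l := 𝓝 (0 : ℝ)) hs hs0 hRs hRts hRtcont hμ
    hPproj hPR hRP hQ1 hQ2 hQP hPQ hinv rfl hPRP hPt hρ hκ hlamκ heig (by positivity)
    (hnt.mono fun t ht => ht.2) (hnt.mono fun t ht => ht.1)
  obtain ⟨ε, hε, hall⟩ := Metric.eventually_nhds_iff.1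
    (hT1.and (hK.and (hRts.and (hnt.mono fun t ht => ht.1))))
  have hsmall : ∀ t : ℝ, |t| < min ε α₀ → _ := fun t ht =>
    hall (y := t) (by rw [Real.dist_0_eq_abs]; exact ht.trans_le (min_le_left _ _))
  refine ⟨min ε α₀, lt_min hε hα₀, min_le_right _ _, fun t n => PowerSeries.coeff n (T t), ?_, ?_⟩
  · intro t ht z hz
    obtain ⟨h1, h2, h3, -⟩ := hsmall t ht
    exact isUnit_and_hasSum_of_formal_inverse (hRt00 t)
      (Summable.of_nonneg_of_le (fun _ => norm_nonneg _) h3 hsS) h1 h2 (by simpa using hz)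
  · classical
    -- the error, cut off outside the range of `t` where it is bounded
    set D : ℝ → ℕ → ℝ := fun t n => if |t| < min ε α₀ then
      ‖PowerSeries.coeff n (T t) - (μ : ℂ)⁻¹ • (ρ t ^ n • P)‖ else 0 with hD
    have hD0 : ∀ t n, 0 ≤ D t n := fun t n => by
      simp only [hD]; split_ifs
      exacts [norm_nonneg _, le_rfl]
    have hDK : ∀ t n, D t n ≤ |K| + ‖(μ : ℂ)⁻¹‖ * ‖P‖ := fun t n => by
      simp only [hD]
      split_ifs with ht
      · obtain ⟨-, h2, -, h4⟩ := hsmall t ht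
        refine (norm_sub_le _ _).trans (add_le_add ((h2 n).trans (le_abs_self K)) ?_)
        rw [norm_smul, norm_smul, norm_pow]
        exact mul_le_mul_of_nonneg_left
          (mul_le_of_le_one_left (norm_nonneg _) (pow_le_one₀ (norm_nonneg _) h4)) (norm_nonneg _)
      · positivity
    have hDlim : Tendsto (fun p : ℝ × ℕ => D p.1 p.2) (𝓝 0 ×ˢ atTop) (𝓝 0) := by
      have h := hT2.norm
      rw [norm_zero] at h
      refine squeeze_zero (fun p => hD0 _ _) (fun p => ?_) h
      simp only [hD]
      split_ifs
      exacts [le_rfl, norm_nonneg _]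
    obtain ⟨eps, del, he, hdel, hle⟩ := exists_separated_bound hD0 hDK hDlim
    refine ⟨eps, del, he, hdel, fun t ht n _ => ?_⟩
    have := hle t n
    simp only [hD, if_pos ht] at this
    exact this
end
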